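/- Let F be a field of characteristic not p (p prime), A a central simple F-algebra of degree p, and L/F a field extension of degree p. Then there exists a field extension E/F such that: (1) the restriction map Br(F)[p] → Br(E)[p] is injective; and (2) the compositum EL splits A ⊗_F E. -/

import Mathlib

open scoped TensorProduct
universe u

/-- A finite-dimensional `F`-algebra is *split* if it is a matrix algebra over `F`. -/
def IsSplit (F : Type u) [Field F] (A : Type u) [Ring A] [Algebra F A] : Prop :=
  ∃ n : ℕ, 0 < n ∧ Nonempty (A ≃ₐ[F] Matrix (Fin n) (Fin n) F)

/-- Brauer equivalence of two `F`-algebras. -/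
def BrauerEquiv (F : Type u) [Field F] (A B : Type u) [Ring A] [Algebra F A]
    [Ring B] [Algebra F B] : Prop :=
  ∃ n m : ℕ, 0 < n ∧ 0 < m ∧ Nonempty (Matrix (Fin n) (Fin n) A ≃ₐ[F] Matrix (Fin m) (Fin m) B)

/-- `A` is a finite-dimensional central simple `F`-algebra. -/
def IsCSA (F A : Type u) [Field F] [Ring A] [Algebra F A] : Prop :=
  Algebra.IsCentral F A ∧ IsSimpleRing A ∧ FiniteDimensional F A

/-- The `n`-fold tensor power of an `F`-algebra. -/
abbrev tpow (F : Type u) [Field F] (A : Type u) [Ring A] [Algebra F A] (n : ℕ) : Type u :=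
  ⨂[F] _ : Fin n, A

/-- The Brauer class of `A` is killed by `p`: its `p`-th tensor power is split. -/
def IsPTorsion (F : Type u) [Field F] (A : Type u) [Ring A] [Algebra F A] (p : ℕ) : Prop :=
  IsSplit F (tpow F A p)

/-- The restriction map `Br(F)[p] → Br(E)[p]` along `f : F →+* E` is injective:
two `p`-torsion Brauer classes that agree after scalar extension agree already over `F`. -/
def ResInjP (p : ℕ) (F E : Type u) [Field F] [Field E] (f : F →+* E) : Prop :=
  letI : Algebra F E := f.toAlgebra
  ∀ (A B : Type u) [Ring A] [Algebra F A] [Ring B] [Algebra F B],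
    IsCSA F A → IsCSA F B → IsPTorsion F A p → IsPTorsion F B p →
    BrauerEquiv E (E ⊗[F] A) (E ⊗[F] B) → BrauerEquiv F A B

/-- The restriction map `Br(F) → Br(E)` along `f : F →+* E` is injective. -/
def ResInj (F E : Type u) [Field F] [Field E] (f : F →+* E) : Prop :=
  letI : Algebra F E := f.toAlgebra
  ∀ (A B : Type u) [Ring A] [Algebra F A] [Ring B] [Algebra F B],
    IsCSA F A → IsCSA F B →
    BrauerEquiv E (E ⊗[F] A) (E ⊗[F] B) → BrauerEquiv F A B

/-- `D` is a central division algebra of degree `p` over `K`. -/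
def IsCentralDivisionOfDeg (K D : Type u) [Field K] [DivisionRing D] [Algebra K D]
    (p : ℕ) : Prop :=
  Algebra.IsCentral K D ∧ FiniteDimensional K D ∧ Module.finrank K D = p ^ 2

/-- Witness for STATEMENT 8: a field extension `E/F` with injective restriction on
`p`-torsion Brauer classes, together with a compositum `N = EL` splitting `A ⊗_F E`. -/
structure SplittingExtension (p : ℕ) (F : Type u) [Field F]
    (A : Type u) [Ring A] [Algebra F A] (L : Type u) [Field L] [Algebra F L] :
    Type (u + 1) where
  E : Type u
  [fieldE : Field E]
  [algFE : Algebra F E]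
  resInj : ResInjP p F E (algebraMap F E)
  /-- the compositum `EL` -/
  N : Type u
  [fieldN : Field N]
  [algFN : Algebra F N]
  [algEN : Algebra E N]
  [algLN : Algebra L N]
  [towerE : IsScalarTower F E N]
  [towerL : IsScalarTower F L N]
  compositum : Algebra.adjoin E (Set.range (algebraMap L N)) = ⊤
  splits : IsSplit N (N ⊗[F] A)

namespace SplitExt

theorem isSimpleRing_baseChange (F N A : Type*) [Field F] [Field N] [Algebra F N] [Ring A]
    [Algebra F A] [Algebra.IsCentral F A] [IsSimpleRing A] : IsSimpleRing (N ⊗[F] A) := by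
  classical
  have : Nontrivial (N ⊗[F] A) := inferInstance
  let B := Module.Basis.ofVectorSpace F N
  let e := TensorProduct.equivFinsuppOfBasisLeft (N := A) B
  have heL : ∀ (a : A) (z : N ⊗[F] A) i, e ((1 ⊗ₜ a) * z) i = a * e z i := by
    intro a z i
    induction z with
    | zero => simp
    | add x y hx hy => simp [mul_add, hx, hy]
    | tmul n b => simp [e]
  have heR : ∀ (a : A) (z : N ⊗[F] A) i, e (z * (1 ⊗ₜ a)) i = e z i * a := by
    intro a z i
    induction z with
    | zero => simp
    | add x y hx hy => simp [add_mul, hx, hy]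
    | tmul n b => simp [e]
  refine ⟨⟨fun I => ?_⟩⟩
  by_cases hI : I = ⊥
  · exact Or.inl hI
  right
  have hex : ∃ m : ℕ, ∃ z ∈ I, z ≠ 0 ∧ (e z).support.card = m := by
    by_contra hcon
    push Not at hcon
    apply hI
    rw [eq_bot_iff]
    intro x hx
    by_contra h0
    exact hcon _ x hx (fun h => h0 (by simp [h])) rfl
  obtain ⟨z, hz, hz0, hzc⟩ := Nat.find_spec hex
  have hmin : ∀ w ∈ I, (e w).support.card < (e z).support.card → w = 0 := by
    intro w hw hlt
    by_contra h0
    exact Nat.find_min hex (hzc ▸ hlt) ⟨w, hw, h0, rfl⟩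
  have hez : e z ≠ 0 := by simpa using hz0
  obtain ⟨k0, hk0⟩ := Finsupp.ne_iff.mp hez
  -- the set of possible k0-coefficients
  have hone : ∃ w ∈ I, (e w).support ⊆ (e z).support ∧ e w k0 = 1 := by
    let J : TwoSidedIdeal A := TwoSidedIdeal.mk' {a | ∃ w ∈ I, (e w).support ⊆ (e z).support ∧ e w k0 = a}
      ⟨0, I.zero_mem, by simp, by simp⟩
      (by
        rintro x y ⟨w, hw, hs, rfl⟩ ⟨w', hw', hs', rfl⟩
        refine ⟨w + w', I.add_mem hw hw', ?_, by simp⟩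
        rw [map_add]
        exact Finsupp.support_add.trans (Finset.union_subset hs hs'))
      (by
        rintro x ⟨w, hw, hs, rfl⟩
        exact ⟨-w, I.neg_mem hw, by rwa [map_neg, Finsupp.support_neg], by simp⟩)
      (by
        rintro x y ⟨w, hw, hs, rfl⟩
        refine ⟨(1 ⊗ₜ x) * w, I.mul_mem_left _ _ hw, ?_, heL _ _ _⟩
        intro i hi
        apply hs
        rw [Finsupp.mem_support_iff] at hi ⊢
        intro h; apply hi; rw [heL, h, mul_zero])
      (by
        rintro x y ⟨w, hw, hs, rfl⟩
        refine ⟨w * (1 ⊗ₜ y), I.mul_mem_right _ _ hw, ?_, heR _ _ _⟩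
        intro i hi
        apply hs
        rw [Finsupp.mem_support_iff] at hi ⊢
        intro h; apply hi; rw [heR, h, zero_mul])
    have hJmem : ∀ a, a ∈ J ↔ ∃ w ∈ I, (e w).support ⊆ (e z).support ∧ e w k0 = a := by
      intro a
      exact TwoSidedIdeal.mem_mk' _ _ _ _ _ _ _
    have hJ : J = ⊤ := by
      rcases eq_bot_or_eq_top J with h | h
      · exfalso
        have : e z k0 ∈ J := (hJmem _).2 ⟨z, hz, subset_rfl, rfl⟩
        rw [h, TwoSidedIdeal.mem_bot] at this
        exact hk0 this
      · exact h
    have : (1 : A) ∈ J := by rw [hJ]; trivial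
    exact (hJmem _).1 this
  obtain ⟨w, hw, hws, hw1⟩ := hone
  have hcomm : ∀ a : A, (1 ⊗ₜ a) * w - w * (1 ⊗ₜ a) = 0 := by
    intro a
    refine hmin _ (I.sub_mem (I.mul_mem_left _ _ hw) (I.mul_mem_right _ _ hw)) ?_
    apply Finset.card_lt_card
    refine ⟨?_, ?_⟩
    · intro i hi
      apply hws
      rw [Finsupp.mem_support_iff] at hi ⊢
      intro h; apply hi; simp [heL, heR, h]
    · intro hcon
      have := hcon (show k0 ∈ _ by simpa using hk0)
      rw [Finsupp.mem_support_iff] at this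
      apply this
      simp [heL, heR, hw1]
  have hcen : ∀ i, ∃ c : F, algebraMap F A c = e w i := by
    intro i
    have : e w i ∈ Subalgebra.center F A := by
      rw [Subalgebra.mem_center_iff]
      intro a
      have := congrArg (fun t => e t i) (hcomm a)
      simpa [heL, heR, sub_eq_zero] using this
    rw [Algebra.IsCentral.center_eq_bot, Algebra.mem_bot] at this
    exact this
  choose c hc using hcen
  have hwn : ∃ n : N, w = n ⊗ₜ 1 := by
    refine ⟨(e w).sum fun i _ => c i • B i, ?_⟩
    have : w = (e w).sum fun i a => B i ⊗ₜ a := by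
      conv_lhs => rw [← e.symm_apply_apply w]
      exact TensorProduct.equivFinsuppOfBasisLeft_symm_apply _ _
    rw [Finsupp.sum, TensorProduct.sum_tmul]
    conv_lhs => rw [this, Finsupp.sum]
    refine Finset.sum_congr rfl fun i _ => ?_
    rw [← hc i, Algebra.algebraMap_eq_smul_one, TensorProduct.tmul_smul, TensorProduct.smul_tmul']
  obtain ⟨n, rfl⟩ := hwn
  have hn : n ≠ 0 := by
    rintro rfl
    simp at hw1
  rw [← TwoSidedIdeal.one_mem_iff]
  have := I.mul_mem_left (n⁻¹ ⊗ₜ[F] (1 : A)) _ hw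
  rwa [Algebra.TensorProduct.tmul_mul_tmul, inv_mul_cancel₀ hn, mul_one,
    ← Algebra.TensorProduct.one_def] at this

theorem isCentral_baseChange (F N A : Type*) [Field F] [Field N] [Algebra F N] [Ring A]
    [Algebra F A] [Algebra.IsCentral F A] : Algebra.IsCentral N (N ⊗[F] A) := by
  classical
  let B := Module.Basis.ofVectorSpace F N
  let e := TensorProduct.equivFinsuppOfBasisLeft (N := A) B
  have heL : ∀ (a : A) (z : N ⊗[F] A) i, e ((1 ⊗ₜ a) * z) i = a * e z i := by
    intro a z i
    induction z with
    | zero => simp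
    | add x y hx hy => simp [mul_add, hx, hy]
    | tmul n b => simp [e]
  have heR : ∀ (a : A) (z : N ⊗[F] A) i, e (z * (1 ⊗ₜ a)) i = e z i * a := by
    intro a z i
    induction z with
    | zero => simp
    | add x y hx hy => simp [add_mul, hx, hy]
    | tmul n b => simp [e]
  refine ⟨fun w hw => ?_⟩
  rw [Subalgebra.mem_center_iff] at hw
  have hcen : ∀ i, ∃ c : F, algebraMap F A c = e w i := by
    intro i
    have : e w i ∈ Subalgebra.center F A := by
      rw [Subalgebra.mem_center_iff]
      intro a
      have := congrArg (fun t => e t i) (hw (1 ⊗ₜ a))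
      simpa only [heL, heR] using this
    rw [Algebra.IsCentral.center_eq_bot, Algebra.mem_bot] at this
    exact this
  choose c hc using hcen
  rw [Algebra.mem_bot]
  refine ⟨(e w).sum fun i _ => c i • B i, ?_⟩
  have : w = (e w).sum fun i a => B i ⊗ₜ a := by
    conv_lhs => rw [← e.symm_apply_apply w]
    exact TensorProduct.equivFinsuppOfBasisLeft_symm_apply _ _
  rw [Algebra.TensorProduct.algebraMap_apply, Algebra.algebraMap_self_apply, Finsupp.sum,
    TensorProduct.sum_tmul]
  conv_rhs => rw [this, Finsupp.sum]
  refine Finset.sum_congr rfl fun i _ => ?_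
  rw [← hc i, Algebra.algebraMap_eq_smul_one, TensorProduct.tmul_smul, TensorProduct.smul_tmul']

/-- over a separably closed field central simple algebras are matrix algebras -/
theorem exists_matrix_of_isSepClosed (K R : Type*) [Field K] [IsSepClosed K] [Ring R] [Algebra K R]
    [Algebra.IsCentral K R] [IsSimpleRing R] [FiniteDimensional K R] :
    ∃ n : ℕ, 0 < n ∧ Nonempty (R ≃ₐ[K] Matrix (Fin n) (Fin n) K) := by
  have := IsArtinianRing.of_finite K R
  obtain ⟨n, hn, D, _, _, _, ⟨e⟩⟩ := IsSimpleRing.exists_algEquiv_matrix_divisionRing_finite K R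
  have hc : Algebra.IsCentral K D := by
    have : Algebra.IsCentral K (Matrix (Fin n) (Fin n) D) := Algebra.IsCentral.of_algEquiv K _ _ e
    refine ⟨fun x hx => ?_⟩
    have h2 : Matrix.scalar (Fin n) x ∈ Subalgebra.center K (Matrix (Fin n) (Fin n) D) := by
      rw [Matrix.subalgebraCenter_eq_scalarAlgHom_map]
      exact ⟨x, hx, rfl⟩
    rw [Algebra.IsCentral.center_eq_bot, Algebra.mem_bot] at h2
    obtain ⟨k, hk⟩ := h2
    rw [Algebra.mem_bot]
    refine ⟨k, ?_⟩
    have := congrFun (congrFun hk 0) 0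
    simpa [Matrix.algebraMap_matrix_apply] using this
  have hbot : (⊥ : Subalgebra K D) = ⊤ := by
    by_contra hne
    obtain ⟨x, hx, hs⟩ := JacobsonNoether.exists_separable_and_not_isCentral' hne
    apply hx
    obtain ⟨r, hr⟩ := IsSepClosed.exists_root (minpoly K x)
      (minpoly.degree_pos (Algebra.IsIntegral.isIntegral x)).ne' hs
    have hirr := minpoly.irreducible (Algebra.IsIntegral.isIntegral (R := K) x)
    have hd := Polynomial.degree_eq_one_of_irreducible_of_root hirr hr
    rw [Algebra.mem_bot]
    exact minpoly.mem_range_of_degree_eq_one K x hd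
  have hb : Function.Bijective (algebraMap K D) := by
    refine ⟨(algebraMap K D).injective, fun x => ?_⟩
    have : x ∈ (⊥ : Subalgebra K D) := hbot ▸ Algebra.mem_top
    exact Algebra.mem_bot.1 this
  exact ⟨n, Nat.pos_of_ne_zero hn.out,
    ⟨e.trans <| .mapMatrix <| .symm <| .ofBijective (Algebra.ofId K D) hb⟩⟩

theorem exists_splitting (F K A : Type*) [Field F] [Field K] [Algebra F K] [IsSepClosed K] [Ring A]
    [Algebra F A] [Algebra.IsCentral F A] [IsSimpleRing A] [FiniteDimensional F A] :
    ∃ n : ℕ, 0 < n ∧ Module.finrank F A = n ^ 2 ∧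
      Nonempty (A →ₐ[F] Matrix (Fin n) (Fin n) K) := by
  have := isSimpleRing_baseChange F K A
  have := isCentral_baseChange F K A
  obtain ⟨n, hn, ⟨e⟩⟩ := exists_matrix_of_isSepClosed K (K ⊗[F] A)
  refine ⟨n, hn, ?_, ⟨(e.toAlgHom.restrictScalars F).comp Algebra.TensorProduct.includeRight⟩⟩
  have := e.toLinearEquiv.finrank_eq
  rw [Module.finrank_baseChange, Module.finrank_matrix] at this
  simpa [pow_two] using this

section Phi
variable {F M A ι : Type*} [Field F] [Field M] [Algebra F M] [Ring A]
    [Algebra F A] [Algebra.IsCentral F A] [IsSimpleRing A] [FiniteDimensional F A]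
    [Fintype ι] [DecidableEq ι] [Nonempty ι]

theorem exists_equiv (hd : Module.finrank F A = Fintype.card ι ^ 2)
    (φ : A →ₐ[F] Matrix ι ι M) : ∃ Φ : (M ⊗[F] A) ≃ₐ[M] Matrix ι ι M,
      ∀ m a, Φ (m ⊗ₜ a) = m • φ a := by
  let f : (M ⊗[F] A) →ₐ[M] Matrix ι ι M :=
    Algebra.TensorProduct.lift (Algebra.ofId _ _) φ (fun m a => Algebra.commutes m (φ a))
  have := isSimpleRing_baseChange F M A
  have hi : Function.Injective f := f.toRingHom.injective
  have hf : Module.finrank M (M ⊗[F] A) = Module.finrank M (Matrix ι ι M) := by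
    rw [Module.finrank_baseChange, Module.finrank_matrix, hd]; simp [pow_two]
  have hs : Function.Surjective f :=
    (LinearMap.injective_iff_surjective_of_finrank_eq_finrank (f := f.toLinearMap) hf).1 hi
  refine ⟨AlgEquiv.ofBijective f ⟨hi, hs⟩, fun m a => ?_⟩
  rw [Algebra.smul_def]
  exact Algebra.TensorProduct.lift_tmul (Algebra.ofId M (Matrix ι ι M)) φ (fun m a => Algebra.commutes m (φ a)) m a

theorem exists_coeff (hd : Module.finrank F A = Fintype.card ι ^ 2) {κ : Type*} [Fintype κ]
    (φ : A →ₐ[F] Matrix ι ι M) (c : Module.Basis κ F A) (z : Matrix ι ι M) :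
    ∃ m : κ → M, z = ∑ k, m k • φ (c k) := by
  obtain ⟨Φ, hΦ⟩ := exists_equiv hd φ
  let b := (c.baseChange M).map Φ.toLinearEquiv
  refine ⟨fun k => b.repr z k, ?_⟩
  conv_lhs => rw [← b.sum_repr z]
  simp [b, hΦ]

theorem coeff_unique (hd : Module.finrank F A = Fintype.card ι ^ 2) {κ : Type*} [Fintype κ]
    (φ : A →ₐ[F] Matrix ι ι M) (c : Module.Basis κ F A) (m m' : κ → M)
    (h : ∑ k, m k • φ (c k) = ∑ k, m' k • φ (c k)) : m = m' := by
  obtain ⟨Φ, hΦ⟩ := exists_equiv hd φ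
  let b := (c.baseChange M).map Φ.toLinearEquiv
  have hb : ∀ k, φ (c k) = b k := by simp [b, hΦ]
  simp only [hb] at h
  funext k
  have := congrArg (fun z => b.repr z k) h
  classical simpa [Finsupp.single_apply] using this

theorem skolem_noether (hd : Module.finrank F A = Fintype.card ι ^ 2)
    (φ φ' : A →ₐ[F] Matrix ι ι M) :
    ∃ g : Matrix ι ι M, IsUnit g ∧ ∀ x, g * φ x = φ' x * g := by
  obtain ⟨Φ, hΦ⟩ := exists_equiv hd φ
  obtain ⟨Φ', hΦ'⟩ := exists_equiv hd φ'
  let f : Module.End M (ι → M) ≃ₐ[M] Module.End M (ι → M) :=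
    ((Matrix.toLinAlgEquiv' (R := M) (n := ι)).symm.trans (Φ.symm.trans Φ')).trans
      Matrix.toLinAlgEquiv'
  obtain ⟨T, hT⟩ := AlgEquiv.eq_linearEquivConjAlgEquiv f
  refine ⟨LinearMap.toMatrixAlgEquiv' T.toLinearMap, ?_, fun x => ?_⟩
  · apply IsUnit.map (LinearMap.toMatrixAlgEquiv' (R := M) (n := ι))
    exact (Module.End.isUnit_iff _).2 T.bijective
  · have h1 : f (Matrix.toLinAlgEquiv' (φ x)) = Matrix.toLinAlgEquiv' (φ' x) := by
      have : Φ.symm (φ x) = 1 ⊗ₜ x := by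
        rw [AlgEquiv.symm_apply_eq, hΦ, one_smul]
      simp [f, this, hΦ']
    rw [hT] at h1
    have h2 : T.toLinearMap * Matrix.toLinAlgEquiv' (φ x) = Matrix.toLinAlgEquiv' (φ' x) * T.toLinearMap := by
      rw [← h1]
      refine LinearMap.ext fun v => ?_
      simp [LinearEquiv.conjAlgEquiv_apply]
    apply (Matrix.toLinAlgEquiv' (R := M) (n := ι)).injective
    simpa using h2

theorem commutant (hd : Module.finrank F A = Fintype.card ι ^ 2)
    (φ : A →ₐ[F] Matrix ι ι M) (z : Matrix ι ι M) (hz : ∀ x, z * φ x = φ x * z) :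
    ∃ m : M, z = m • 1 := by
  have : z ∈ Subalgebra.center M (Matrix ι ι M) := by
    rw [Subalgebra.mem_center_iff]
    intro b
    obtain ⟨m, rfl⟩ := exists_coeff hd φ (Module.finBasis F A) b
    simp [Finset.mul_sum, Finset.sum_mul, hz]
  rw [Algebra.IsCentral.center_eq_bot, Algebra.mem_bot] at this
  obtain ⟨m, rfl⟩ := this
  exact ⟨m, Algebra.algebraMap_eq_smul_one m⟩

/-- two matrices intertwining the same pair of representations are proportional -/
theorem intertwiner_unique (hd : Module.finrank F A = Fintype.card ι ^ 2)
    (φ φ' : A →ₐ[F] Matrix ι ι M) (g h : Matrix ι ι M) (hg : IsUnit g)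
    (hgx : ∀ x, g * φ x = φ' x * g) (hhx : ∀ x, h * φ x = φ' x * h) :
    ∃ m : M, h = m • g := by
  obtain ⟨u, rfl⟩ := hg
  obtain ⟨m, hm⟩ := commutant hd φ (((u⁻¹ : (Matrix ι ι M)ˣ) : Matrix ι ι M) * h) (by
    intro x
    rw [mul_assoc, hhx, ← mul_assoc, ← mul_assoc]
    congr 1
    rw [Units.inv_mul_eq_iff_eq_mul, ← mul_assoc, hgx, mul_assoc, Units.mul_inv, mul_one])
  refine ⟨m, ?_⟩
  rw [Units.inv_mul_eq_iff_eq_mul] at hm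
  rw [hm]; simp

/-- descent of coefficients -/
theorem coeff_fixed (hd : Module.finrank F A = Fintype.card ι ^ 2) {κ : Type*} [Fintype κ]
    (φ : A →ₐ[F] Matrix ι ι M) (c : Module.Basis κ F A) (m : κ → M)
    (s : M →+* M) (b : Matrix ι ι M) (hb : IsUnit b)
    (hbx : ∀ x, b * (φ x).map s = φ x * b)
    (hz : b * (∑ k, m k • φ (c k)).map s = (∑ k, m k • φ (c k)) * b) (k : κ) : s (m k) = m k := by
  have h1 : (∑ k, m k • φ (c k)).map s = ∑ k, s (m k) • (φ (c k)).map s := by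
    ext i j
    simp [Matrix.sum_apply]
  rw [h1, Finset.mul_sum] at hz
  simp only [Matrix.mul_smul, hbx, ← Matrix.smul_mul] at hz
  rw [← Finset.sum_mul] at hz
  have := coeff_unique hd φ c _ _ (hb.mul_right_cancel hz)
  exact congrFun this k

end Phi
end SplitExt

namespace SplitExt
open MvPolynomial

section Psi
variable (F K ι : Type*) [Field F] [Field K] [Algebra F K] [Fintype ι] [DecidableEq ι]
  [MulAction (K ≃ₐ[F] K) ι]

/-- twisted linear substitutions -/
structure Tr where
  s : K ≃ₐ[F] K
  a : Matrix ι ι K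
  t : ι → K
  ha : IsUnit a
  ht : ∀ i, t i ≠ 0

variable {F K ι}

theorem isUnit_map {R R' : Type*} [CommRing R] [CommRing R'] (f : R →+* R') {a : Matrix ι ι R} (h : IsUnit a) :
    IsUnit (a.map f) := h.map f.mapMatrix

/-- composition -/
def Tr.mul (T U : Tr F K ι) : Tr F K ι where
  s := T.s * U.s
  a := U.a.map (T.s : K →+* K) * T.a
  t := fun i => T.s (U.t i) * T.t (U.s • i)
  ha := (isUnit_map _ U.ha).mul T.ha
  ht := fun i => mul_ne_zero (by simpa using U.ht i) (T.ht _)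

/-- identity -/
def Tr.one : Tr F K ι := ⟨1, 1, 1, isUnit_one, fun _ => one_ne_zero⟩

/-- torus element -/
def Tr.tor (t : ι → K) (ht : ∀ i, t i ≠ 0) : Tr F K ι := ⟨1, 1, t, isUnit_one, ht⟩

/-- inverse -/
noncomputable def Tr.inv (T : Tr F K ι) : Tr F K ι where
  s := T.s⁻¹
  a := (T.a⁻¹).map ((T.s⁻¹ : K ≃ₐ[F] K) : K →+* K)
  t := fun i => T.s⁻¹ (T.t (T.s⁻¹ • i))⁻¹
  ha := isUnit_map _ ((Matrix.isUnit_nonsing_inv_iff).2 T.ha)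
  ht := fun i => by simpa using T.ht _

theorem Tr.ext' {T U : Tr F K ι} (h1 : T.s = U.s) (h2 : T.a = U.a) (h3 : T.t = U.t) : T = U := by
  cases T; cases U; congr

theorem Tr.mul_inv (T : Tr F K ι) : T.mul T.inv = Tr.one := by
  have hdet := (Matrix.isUnit_iff_isUnit_det _).1 T.ha
  apply Tr.ext'
  · simp [Tr.mul, Tr.inv, Tr.one]
  · have : ((T.a⁻¹).map ((T.s⁻¹ : K ≃ₐ[F] K) : K →+* K)).map (T.s : K →+* K) = T.a⁻¹ := by
      ext i j
      simp only [Matrix.map_apply, RingHom.coe_coe]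
      exact T.s.apply_symm_apply _
    simp only [Tr.mul, Tr.inv, Tr.one, this]
    exact Matrix.nonsing_inv_mul _ hdet
  · funext i
    simp only [Tr.mul, Tr.inv, Tr.one, Pi.one_apply]
    have : T.s (T.s⁻¹ (T.t (T.s⁻¹ • i))⁻¹) = (T.t (T.s⁻¹ • i))⁻¹ := T.s.apply_symm_apply _
    rw [this, inv_mul_cancel₀ (T.ht _)]

theorem Tr.inv_mul (T : Tr F K ι) : T.inv.mul T = Tr.one := by
  have hdet := (Matrix.isUnit_iff_isUnit_det _).1 T.ha
  apply Tr.ext'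
  · simp [Tr.mul, Tr.inv, Tr.one]
  · simp only [Tr.mul, Tr.inv, Tr.one]
    rw [← Matrix.map_mul, Matrix.mul_nonsing_inv _ hdet]
    exact Matrix.map_one _ (map_zero _) (map_one _)
  · funext i
    simp only [Tr.mul, Tr.inv, Tr.one, Pi.one_apply, inv_smul_smul]
    rw [← map_mul, mul_inv_cancel₀ (T.ht _), map_one]

/-- action on polynomials -/
noncomputable def Psi (T : Tr F K ι) : MvPolynomial (ι × ι) K →+* MvPolynomial (ι × ι) K :=
  eval₂Hom (C.comp (T.s : K →+* K)) (fun x => C (T.t x.2) * ∑ k, C (T.a x.1 k) * X (k, T.s • x.2))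

@[simp] theorem Psi_C (T : Tr F K ι) (k : K) : Psi T (C k) = C (T.s k) := by
  simp [Psi]

theorem Psi_X (T : Tr F K ι) (x : ι × ι) :
    Psi T (X x) = C (T.t x.2) * ∑ k, C (T.a x.1 k) * X (k, T.s • x.2) := by
  simp [Psi]

theorem Psi_mul (T U : Tr F K ι) : Psi (T.mul U) = (Psi T).comp (Psi U) := by
  apply MvPolynomial.ringHom_ext
  · intro k; simp [Tr.mul]
  · rintro ⟨j, i⟩
    simp only [RingHom.comp_apply, Psi_X, map_mul, map_sum, Psi_C]
    simp only [Tr.mul, Matrix.mul_apply, Matrix.map_apply, map_mul, map_sum, mul_smul,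
      Finset.sum_mul, Finset.mul_sum]
    rw [Finset.sum_comm]
    refine Finset.sum_congr rfl fun k _ => Finset.sum_congr rfl fun l _ => ?_
    simp only [RingHom.coe_coe]
    ring

theorem Psi_one : Psi (Tr.one : Tr F K ι) = RingHom.id _ := by
  apply MvPolynomial.ringHom_ext
  · intro k; simp [Tr.one]
  · rintro ⟨j, i⟩
    rw [Psi_X]
    simp [Tr.one, Matrix.one_apply]

/-- action on polynomials as an equivalence -/
noncomputable def PsiE (T : Tr F K ι) : MvPolynomial (ι × ι) K ≃+* MvPolynomial (ι × ι) K :=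
  RingEquiv.ofRingHom (Psi T) (Psi T.inv) (by rw [← Psi_mul, Tr.mul_inv, Psi_one])
    (by rw [← Psi_mul, Tr.inv_mul, Psi_one])

theorem PsiE_apply (T : Tr F K ι) (f) : PsiE T f = Psi T f := rfl

theorem Psi_injective (T : Tr F K ι) : Function.Injective (Psi T) := (PsiE T).injective

/-- action on rational functions -/
noncomputable def PsiM (T : Tr F K ι) :
    FractionRing (MvPolynomial (ι × ι) K) →+* FractionRing (MvPolynomial (ι × ι) K) :=
  IsFractionRing.map (Psi_injective T)

@[simp] theorem PsiM_algebraMap (T : Tr F K ι) (f : MvPolynomial (ι × ι) K) :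
    PsiM T (algebraMap _ _ f) = algebraMap _ _ (Psi T f) := by
  simp [PsiM, IsFractionRing.map]

@[simp] theorem PsiM_algebraMapK (T : Tr F K ι) (k : K) :
    PsiM T (algebraMap K _ k) = algebraMap K _ (T.s k) := by
  rw [IsScalarTower.algebraMap_apply K (MvPolynomial (ι × ι) K), PsiM_algebraMap,
    MvPolynomial.algebraMap_eq, Psi_C]
  rw [IsScalarTower.algebraMap_apply K (MvPolynomial (ι × ι) K), MvPolynomial.algebraMap_eq]

@[simp] theorem PsiM_algebraMapF (T : Tr F K ι) (k : F) :
    PsiM T (algebraMap F _ k) = algebraMap F _ k := by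
  rw [IsScalarTower.algebraMap_apply F K, PsiM_algebraMapK, AlgEquiv.commutes]

theorem PsiM_mul (T U : Tr F K ι) : PsiM (T.mul U) = (PsiM T).comp (PsiM U) := by
  apply IsLocalization.ringHom_ext (nonZeroDivisors (MvPolynomial (ι × ι) K))
  refine RingHom.ext fun x => ?_
  simp [Psi_mul]

/-- generic matrix -/
noncomputable def XM (K ι : Type*) [Field K] [Fintype ι] [DecidableEq ι] : Matrix ι ι (FractionRing (MvPolynomial (ι × ι) K)) :=
  (Matrix.mvPolynomialX ι ι K).map (algebraMap _ _)

theorem det_XM : (XM K ι).det = algebraMap _ _ (Matrix.mvPolynomialX ι ι K).det := by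
  unfold XM
  exact ((algebraMap (MvPolynomial (ι × ι) K) (FractionRing (MvPolynomial (ι × ι) K))).map_det _).symm

theorem det_XM_ne_zero : (XM K ι).det ≠ 0 := by
  rw [det_XM]
  simpa using Matrix.det_mvPolynomialX_ne_zero ι K

/-- scalar matrices over K inside the function field -/
noncomputable def toM (a : Matrix ι ι K) : Matrix ι ι (FractionRing (MvPolynomial (ι × ι) K)) :=
  a.map (algebraMap K _)

theorem PsiM_XM (T : Tr F K ι) : (XM K ι).map (PsiM T) =
    Matrix.of fun j i => algebraMap K _ (T.t i) * (toM T.a * XM K ι) j (T.s • i) := by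
  ext j i
  simp only [XM, Matrix.map_apply, Matrix.mvPolynomialX, Matrix.of_apply, PsiM_algebraMap, Psi_X,
    map_mul, map_sum, Matrix.mul_apply, toM]
  rfl

theorem PsiM_det (T : Tr F K ι) : ∃ κ : K, κ ≠ 0 ∧
    PsiM T (XM K ι).det = algebraMap K _ κ * (XM K ι).det := by
  have h1 : (PsiM T) (XM K ι).det = ((XM K ι).map (PsiM T)).det := (PsiM T).map_det _
  rw [h1, PsiM_XM]
  have h2 : (Matrix.of fun j i => algebraMap K _ (T.t i) * (toM T.a * XM K ι) j (T.s • i)) =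
    (Matrix.of fun j i => algebraMap K _ (T.t i) *
      ((toM T.a * XM K ι).submatrix id (MulAction.toPerm T.s)) j i) := rfl
  rw [h2, Matrix.det_mul_row, Matrix.det_permute', Matrix.det_mul]
  have h3 : (toM T.a).det = algebraMap K (FractionRing (MvPolynomial (ι × ι) K)) T.a.det := ((algebraMap K (FractionRing (MvPolynomial (ι × ι) K))).map_det T.a).symm
  refine ⟨(∏ i, T.t i) * (Equiv.Perm.sign (MulAction.toPerm T.s : Equiv.Perm ι) : ℤ) * T.a.det, ?_, ?_⟩
  · refine mul_ne_zero (mul_ne_zero (Finset.prod_ne_zero_iff.2 fun i _ => T.ht i) ?_) ?_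
    · rcases Int.units_eq_one_or (Equiv.Perm.sign (MulAction.toPerm T.s : Equiv.Perm ι)) with h | h <;> simp [h]
    · exact ((Matrix.isUnit_iff_isUnit_det _).1 T.ha).ne_zero
  · rw [h3, map_mul, map_mul, map_prod, map_intCast]
    ring

theorem PsiM_det_tor (t : ι → K) (ht) :
    PsiM (Tr.tor (F := F) t ht) (XM K ι).det = algebraMap K _ (∏ i, t i) * (XM K ι).det := by
  have h1 : (PsiM (Tr.tor (F := F) t ht)) (XM K ι).det = ((XM K ι).map (PsiM (Tr.tor (F := F) t ht))).det := (PsiM (Tr.tor (F := F) t ht)).map_det _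
  rw [h1, PsiM_XM]
  have h2 : (Matrix.of fun j i => algebraMap K _ ((Tr.tor (F := F) t ht).t i) * (toM (Tr.tor (F := F) t ht).a * XM K ι) j ((Tr.tor (F := F) t ht).s • i)) =
    (Matrix.of fun j i => algebraMap K _ (t i) * XM K ι j i) := by
    ext j i
    simp [Tr.tor, toM]
  rw [h2, Matrix.det_mul_row, map_prod]

theorem coeff_tor (t : ι → K) (ht) (f : MvPolynomial (ι × ι) K) (m : ι × ι →₀ ℕ) :
    coeff m (Psi (Tr.tor (F := F) t ht) f) = (∏ x, t x.2 ^ m x) * coeff m f := by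
  induction f using MvPolynomial.induction_on' with
  | add p q hp hq => simp [hp, hq, mul_add]
  | monomial u a =>
    have : Psi (Tr.tor (F := F) t ht) (monomial u a) = monomial u ((∏ x, t x.2 ^ u x) * a) := by
      rw [MvPolynomial.monomial_eq, map_mul, Psi_C, Finsupp.prod_fintype _ _ (by simp), map_prod]
      have : ∀ x, Psi (Tr.tor (F := F) t ht) (X x ^ u x) = C (t x.2 ^ u x) * X x ^ u x := by
        intro x
        rw [map_pow, Psi_X]
        simp [Tr.tor, Matrix.one_apply, mul_pow]
      simp only [this, Finset.prod_mul_distrib]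
      rw [MvPolynomial.monomial_eq, Finsupp.prod_fintype _ _ (by simp)]
      simp only [Tr.tor, map_mul, map_prod, AlgEquiv.one_apply]
      ring
    rw [this, coeff_monomial, coeff_monomial]
    split_ifs with h
    · rw [h]
    · simp

theorem Psi_smooth (T : Tr F K ι) (h1 : T.a = 1) (h2 : T.t = 1) (h3 : ∀ i : ι, T.s • i = i)
    (f : MvPolynomial (ι × ι) K) (hf : ∀ m ∈ f.support, T.s (f.coeff m) = f.coeff m) : Psi T f = f := by
  have hX : ∀ x, Psi T (X x) = X x := by
    intro x
    rw [Psi_X, h1, h2, h3]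
    simp [Matrix.one_apply]
  conv_lhs => rw [f.as_sum]
  conv_rhs => rw [f.as_sum]
  rw [map_sum]
  refine Finset.sum_congr rfl fun m hm => ?_
  rw [MvPolynomial.monomial_eq, map_mul, Psi_C, hf m hm, Finsupp.prod, map_prod]
  simp [hX]

theorem PsiM_smooth (f : FractionRing (MvPolynomial (ι × ι) K)) : ∃ s : Finset K, ∀ T : Tr F K ι,
    T.a = 1 → T.t = 1 → (∀ i : ι, T.s • i = i) → (∀ x ∈ s, T.s x = x) → PsiM T f = f := by
  classical
  obtain ⟨a, b, hb, rfl⟩ := IsFractionRing.div_surjective (A := MvPolynomial (ι × ι) K) f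
  refine ⟨a.support.image a.coeff ∪ b.support.image b.coeff, fun T h1 h2 h3 h => ?_⟩
  rw [map_div₀, PsiM_algebraMap, PsiM_algebraMap, Psi_smooth T h1 h2 h3 a, Psi_smooth T h1 h2 h3 b]
  · intro m hm
    exact h _ (Finset.mem_union_right _ (Finset.mem_image_of_mem _ hm))
  · intro m hm
    exact h _ (Finset.mem_union_left _ (Finset.mem_image_of_mem _ hm))

end Psi
end SplitExt

namespace SplitExt
open MvPolynomial

section Descent
variable {F K : Type*} [Field F] [Field K] [Algebra F K] [IsGalois F K]

theorem span_fixed {W : Type*} [AddCommGroup W] [Module K W] (s : (K ≃ₐ[F] K) → W →+ W)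
    (hs1 : ∀ σ (k : K) w, s σ (k • w) = σ k • s σ w)
    (hs2 : ∀ σ τ w, s (σ * τ) w = s σ (s τ w))
    (hs3 : ∀ w, ∃ S : Finset K, ∀ σ : K ≃ₐ[F] K, (∀ x ∈ S, σ x = x) → s σ w = w) :
    Submodule.span K {w | ∀ σ, s σ w = w} = ⊤ := by
  by_contra hne
  obtain ⟨w0, -, hw0⟩ := SetLike.exists_of_lt (lt_top_iff_ne_top.2 hne)
  obtain ⟨l, hl0, hl⟩ := Submodule.exists_le_ker_of_notMem hw0
  obtain ⟨S, hS⟩ := hs3 w0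
  let K1 := FiniteGaloisIntermediateField.adjoin F (S : Set K)
  have hSK : ∀ x ∈ S, x ∈ K1.toIntermediateField := fun x hx =>
    FiniteGaloisIntermediateField.subset_adjoin F (S : Set K) hx
  let r : (K ≃ₐ[F] K) →* (K1 ≃ₐ[F] K1) := AlgEquiv.restrictNormalHom K1
  have hr : ∀ σ (x : K1), ((r σ x : K1) : K) = σ x := fun σ x => AlgEquiv.restrictNormal_commutes σ K1 x
  have hrs : Function.Surjective r := AlgEquiv.restrictNormalHom_surjective K
  choose lift hlift using hrs
  have hwd : ∀ (σ τ : K ≃ₐ[F] K), r σ = r τ → ∀ x : K1, s σ ((x : K) • w0) = s τ ((x : K) • w0) := by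
    intro σ τ h x
    have hfix : ∀ y : K1, (τ⁻¹ * σ) y = y := by
      intro y
      have h1 : σ y = τ y := by rw [← hr, ← hr, h]
      rw [AlgEquiv.mul_apply, h1]
      exact τ.symm_apply_apply _
    have h2 : s (τ⁻¹ * σ) ((x : K) • w0) = (x : K) • w0 := by
      rw [hs1, hfix, hS]
      intro y hy
      exact hfix ⟨y, hSK y hy⟩
    calc s σ ((x : K) • w0) = s (τ * (τ⁻¹ * σ)) ((x : K) • w0) := by rw [mul_inv_cancel_left]
      _ = _ := by rw [hs2, h2]
  have hsum : ∀ x : K1, ∑ g : K1 ≃ₐ[F] K1, ((g x : K1) : K) * l (s (lift g) w0) = 0 := by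
    intro x
    have hu : ∀ τ, s τ (∑ g : K1 ≃ₐ[F] K1, s (lift g) ((x : K) • w0)) =
        ∑ g : K1 ≃ₐ[F] K1, s (lift g) ((x : K) • w0) := by
      intro τ
      rw [map_sum, ← Equiv.sum_comp (Equiv.mulLeft (r τ)) (fun g => s (lift g) ((x : K) • w0))]
      refine Finset.sum_congr rfl fun g _ => ?_
      rw [← hs2]
      apply hwd
      rw [map_mul, hlift, hlift]; rfl
    have := hl (Submodule.subset_span hu)
    rw [LinearMap.mem_ker, map_sum] at this
    rw [← this]
    refine Finset.sum_congr rfl fun g _ => ?_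
    rw [hs1, map_smul, smul_eq_mul, ← hr, hlift]
  have hli := linearIndependent_monoidHom K1 K
  let ch : (K1 ≃ₐ[F] K1) → (K1 →* K) := fun g => ((algebraMap K1 K).comp (g : K1 →+* K1) : K1 →* K)
  have hch : Function.Injective ch := by
    intro g g' h
    ext x
    exact congrArg (fun f : K1 →* K => f x) h
  have h3 := Fintype.linearIndependent_iff.1 (hli.comp ch hch) (fun g => l (s (lift g) w0)) (by
    funext x
    simp only [Finset.sum_apply, Pi.smul_apply, smul_eq_mul, Pi.zero_apply, Function.comp]
    rw [← hsum x]
    refine Finset.sum_congr rfl fun g _ => ?_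
    rw [mul_comm]; rfl) 1
  apply hl0
  have h4 := hwd (lift 1) 1 (by rw [hlift, map_one]) 1
  have h5 : s 1 w0 = w0 := hS 1 (by simp)
  simp only [OneMemClass.coe_one, one_smul, h5] at h4
  rw [h4] at h3
  exact h3

theorem exists_unit_fixed [Infinite F] {ι : Type*} [Fintype ι] [DecidableEq ι]
    (s : (K ≃ₐ[F] K) → Matrix ι ι K →+ Matrix ι ι K)
    (hs1 : ∀ σ (k : K) w, s σ (k • w) = σ k • s σ w)
    (hs2 : ∀ σ τ w, s (σ * τ) w = s σ (s τ w))
    (hs3 : ∀ w, ∃ S : Finset K, ∀ σ : K ≃ₐ[F] K, (∀ x ∈ S, σ x = x) → s σ w = w) :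
    ∃ m : Matrix ι ι K, IsUnit m ∧ ∀ σ, s σ m = m := by
  have h1 : (1 : Matrix ι ι K) ∈ Submodule.span K {w | ∀ σ, s σ w = w} := by
    rw [span_fixed s hs1 hs2 hs3]; trivial
  obtain ⟨n, f, g, hfg⟩ := (Submodule.mem_span_set').1 h1
  let q : MvPolynomial (Fin n) K :=
    (∑ j, (X j : MvPolynomial (Fin n) K) • ((g j : Matrix ι ι K).map C)).det
  have hq : ∀ y : Fin n → K, eval y q = (∑ j, y j • (g j : Matrix ι ι K)).det := by
    intro y
    rw [RingHom.map_det]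
    congr 1
    ext a b
    simp [Matrix.sum_apply]
  have hq0 : q ≠ 0 := by
    intro h
    have := hq f
    rw [hfg, h] at this
    simp at this
  have : ∃ y : Fin n → F, eval (fun j => algebraMap F K (y j)) q ≠ 0 := by
    by_contra hcon
    push Not at hcon
    apply hq0
    refine MvPolynomial.funext_set (fun _ => Set.range (algebraMap F K))
      (fun _ => Set.infinite_range_of_injective (algebraMap F K).injective) fun x hx => ?_
    choose y hy using fun i => hx i trivial
    have := hcon y
    rw [map_zero, ← this]
    congr 2
    funext i
    exact (hy i).symm
  obtain ⟨y, hy⟩ := this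
  refine ⟨∑ j, algebraMap F K (y j) • (g j : Matrix ι ι K), ?_, fun σ => ?_⟩
  · rw [Matrix.isUnit_iff_isUnit_det, isUnit_iff_ne_zero, ← hq (fun j => algebraMap F K (y j))]
    exact hy
  · rw [map_sum]
    refine Finset.sum_congr rfl fun j _ => ?_
    rw [hs1, AlgEquiv.commutes, (g j).2 σ]

end Descent
end SplitExt

namespace SplitExt
open MvPolynomial

section Iso
variable {F K : Type*} [Field F] [Field K] [Algebra F K] [IsGalois F K]

/-- conjugation of a representation -/
def conjHom {A R : Type*} [Ring A] [Ring R] [Algebra F A] [Algebra F R] (φ : A →ₐ[F] R) (u : Rˣ) :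
    A →ₐ[F] R where
  toFun x := u * φ x * (u⁻¹ : Rˣ)
  map_one' := by simp
  map_mul' x y := by simp [mul_assoc]
  map_zero' := by simp
  map_add' x y := by simp [mul_add, add_mul]
  commutes' c := by
    rw [AlgHom.commutes, ← Algebra.commutes, mul_assoc, Units.mul_inv, mul_one]

theorem mem_range_of_fixed {ι A : Type*} [Ring A] [Algebra F A] [Algebra.IsCentral F A]
    [IsSimpleRing A] [FiniteDimensional F A] [Fintype ι] [DecidableEq ι] [Nonempty ι]
    (hd : Module.finrank F A = Fintype.card ι ^ 2) (φ : A →ₐ[F] Matrix ι ι K) (z : Matrix ι ι K)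
    (h : ∀ σ : K ≃ₐ[F] K, ∃ b : Matrix ι ι K, IsUnit b ∧ (∀ x, b * (φ x).map σ = φ x * b) ∧
      b * z.map σ = z * b) : ∃ y, φ y = z := by
  let c := Module.finBasis F A
  obtain ⟨m, rfl⟩ := exists_coeff hd φ c z
  have hm : ∀ k, ∃ f : F, algebraMap F K f = m k := by
    intro k
    have : m k ∈ Set.range (algebraMap F K) := by
      rw [InfiniteGalois.mem_range_algebraMap_iff_fixed]
      intro σ
      obtain ⟨b, hb, h1, h2⟩ := h σ
      exact coeff_fixed hd φ c m (σ : K →+* K) b hb h1 h2 k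
    exact this
  choose f hf using hm
  refine ⟨∑ k, f k • c k, ?_⟩
  rw [map_sum]
  refine Finset.sum_congr rfl fun k _ => ?_
  rw [map_smul, ← hf, algebraMap_smul]

theorem iso_of_hom_range {A B R : Type*} [Ring A] [Ring B] [Ring R] [Nontrivial R] [Algebra F A]
    [Algebra F B] [Algebra F R] [IsSimpleRing A] [IsSimpleRing B] [FiniteDimensional F A]
    [FiniteDimensional F B] (hd : Module.finrank F A = Module.finrank F B) (φ : A →ₐ[F] R)
    (ψ : B →ₐ[F] R) (h : ∀ x, ∃ y, ψ y = φ x) : Nonempty (A ≃ₐ[F] B) := by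
  have hψ : Function.Injective ψ := ψ.toRingHom.injective
  have hφ : Function.Injective φ := φ.toRingHom.injective
  let f : A →ₐ[F] B := (AlgEquiv.ofInjective ψ hψ).symm.toAlgHom.comp
    (φ.codRestrict ψ.range (fun x => h x))
  have hi : Function.Injective f := by
    intro x y hxy
    have := (AlgEquiv.ofInjective ψ hψ).symm.injective hxy
    exact hφ (congrArg Subtype.val this)
  exact ⟨AlgEquiv.ofBijective f ⟨hi,
    (LinearMap.injective_iff_surjective_of_finrank_eq_finrank (f := f.toLinearMap) hd).1 hi⟩⟩

theorem descend_iso [Infinite F] {ι A B : Type*} [Ring A] [Algebra F A] [Algebra.IsCentral F A]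
    [IsSimpleRing A] [FiniteDimensional F A] [Ring B] [Algebra F B] [Algebra.IsCentral F B]
    [IsSimpleRing B] [FiniteDimensional F B] [Fintype ι] [DecidableEq ι] [Nonempty ι]
    (hd1 : Module.finrank F A = Fintype.card ι ^ 2) (hd2 : Module.finrank F B = Fintype.card ι ^ 2)
    (φ1 : A →ₐ[F] Matrix ι ι K) (φ2 : B →ₐ[F] Matrix ι ι K)
    (Θ : (K ≃ₐ[F] K) → Matrix ι ι K → Matrix ι ι K → Prop)
    (hu1 : ∀ σ b1 b2, Θ σ b1 b2 → IsUnit b1)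
    (hu2 : ∀ σ b1 b2, Θ σ b1 b2 → IsUnit b2)
    (hx1 : ∀ σ b1 b2, Θ σ b1 b2 → ∀ x, b1 * (φ1 x).map σ = φ1 x * b1)
    (hx2 : ∀ σ b1 b2, Θ σ b1 b2 → ∀ x, b2 * (φ2 x).map σ = φ2 x * b2)
    (hex : ∀ σ, ∃ b1 b2, Θ σ b1 b2)
    (huniq : ∀ σ b1 b2 c1 c2, Θ σ b1 b2 → Θ σ c1 c2 → ∃ k : K, c1 = k • b1 ∧ c2 = k • b2)
    (hmul : ∀ σ τ b1 b2 c1 c2, Θ σ b1 b2 → Θ τ c1 c2 →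
      Θ (σ * τ) (b1 * c1.map σ) (b2 * c2.map σ))
    (hsm : ∃ S : Finset K, ∀ σ : K ≃ₐ[F] K, (∀ x ∈ S, σ x = x) → Θ σ 1 1) :
    Nonempty (A ≃ₐ[F] B) := by
  classical
  choose b1 b2 hb using hex
  let s : (K ≃ₐ[F] K) → Matrix ι ι K →+ Matrix ι ι K := fun σ =>
    { toFun := fun m => b2 σ * m.map σ * (b1 σ)⁻¹
      map_zero' := by simp
      map_add' := fun x y => by
        rw [Matrix.map_add _ (map_add σ), mul_add, add_mul] }
  have hdet : ∀ σ, IsUnit (b1 σ).det := fun σ =>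
    (Matrix.isUnit_iff_isUnit_det _).1 (hu1 _ _ _ (hb σ))
  have hs : ∀ σ m c1 c2, Θ σ c1 c2 → s σ m * c1 = c2 * m.map σ := by
    intro σ m c1 c2 hc
    obtain ⟨k, rfl, rfl⟩ := huniq _ _ _ _ _ (hb σ) hc
    change b2 σ * m.map σ * (b1 σ)⁻¹ * _ = _
    rw [Matrix.mul_smul, mul_assoc, Matrix.nonsing_inv_mul _ (hdet σ), mul_one, Matrix.smul_mul]
  have hmap : ∀ (σ : K ≃ₐ[F] K) (x y : Matrix ι ι K), (x * y).map σ = x.map σ * y.map σ :=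
    fun σ x y => Matrix.map_mul (f := (σ : K →+* K))
  obtain ⟨m, hm, hfix⟩ := exists_unit_fixed s
    (by
      intro σ k w
      change b2 σ * (k • w).map σ * (b1 σ)⁻¹ = σ k • (b2 σ * w.map σ * (b1 σ)⁻¹)
      have : (k • w).map σ = σ k • w.map σ := by ext i j; simp
      rw [this, Matrix.mul_smul, Matrix.smul_mul])
    (by
      intro σ τ w
      have h := hmul σ τ _ _ _ _ (hb σ) (hb τ)
      have h1 := hs _ w _ _ h
      apply (hu1 _ _ _ h).mul_right_cancel
      rw [h1, ← mul_assoc, hs _ _ _ _ (hb σ), mul_assoc, mul_assoc, ← hmap, hs _ _ _ _ (hb τ), hmap]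
      congr 2)
    (by
      intro w
      obtain ⟨S, hS⟩ := hsm
      refine ⟨S ∪ Finset.univ.image (fun x : ι × ι => w x.1 x.2), fun σ hσ => ?_⟩
      have h := hs σ w 1 1 (hS σ fun x hx => hσ x (Finset.mem_union_left _ hx))
      rw [mul_one, one_mul] at h
      rw [h]
      ext i j
      exact hσ _ (Finset.mem_union_right _ (Finset.mem_image.2 ⟨(i, j), Finset.mem_univ _, rfl⟩)))
  obtain ⟨u, rfl⟩ := hm
  refine iso_of_hom_range (hd1.trans hd2.symm) (conjHom φ1 u) φ2 fun x => ?_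
  refine mem_range_of_fixed hd2 φ2 _ fun σ => ⟨b2 σ, hu2 _ _ _ (hb σ), hx2 _ _ _ (hb σ), ?_⟩
  have h1 := hs σ u _ _ (hb σ)
  rw [hfix] at h1
  have h2 : IsUnit ((u : Matrix ι ι K).map σ) := isUnit_map (σ : K →+* K) u.isUnit
  apply h2.mul_right_cancel
  have h3 : (conjHom φ1 u x) * u = u * φ1 x := by
    change (u : Matrix ι ι K) * φ1 x * ((u⁻¹ : (Matrix ι ι K)ˣ) : Matrix ι ι K) * u = _
    rw [mul_assoc, Units.inv_mul, mul_one]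
  calc b2 σ * (conjHom φ1 u x).map σ * (u : Matrix ι ι K).map σ
      = b2 σ * (u : Matrix ι ι K).map σ * (φ1 x).map σ := by
        rw [mul_assoc, ← hmap, h3, hmap, mul_assoc]
    _ = u * φ1 x * b1 σ := by rw [← h1, mul_assoc, hx1 _ _ _ (hb σ), mul_assoc]
    _ = conjHom φ1 u x * b2 σ * (u : Matrix ι ι K).map σ := by
        rw [mul_assoc (conjHom φ1 u x), ← h1, ← mul_assoc, h3]


theorem exists_matrix_division (K : Type*) (R : Type u) [Field K] [Ring R] [Algebra K R]
    [Algebra.IsCentral K R] [IsSimpleRing R] [FiniteDimensional K R] :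
    ∃ n : ℕ, 0 < n ∧ ∃ (D : Type u) (_ : DivisionRing D) (_ : Algebra K D),
      FiniteDimensional K D ∧ Algebra.IsCentral K D ∧
      Nonempty (R ≃ₐ[K] Matrix (Fin n) (Fin n) D) := by
  have := IsArtinianRing.of_finite K R
  obtain ⟨n, hn, D, h1, h2, h3, ⟨e⟩⟩ := IsSimpleRing.exists_algEquiv_matrix_divisionRing_finite K R
  refine ⟨n, Nat.pos_of_ne_zero hn.out, D, h1, h2, h3, ?_, ⟨e⟩⟩
  have : Algebra.IsCentral K (Matrix (Fin n) (Fin n) D) := Algebra.IsCentral.of_algEquiv K _ _ e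
  refine ⟨fun x hx => ?_⟩
  have h2 : Matrix.scalar (Fin n) x ∈ Subalgebra.center K (Matrix (Fin n) (Fin n) D) := by
    rw [Matrix.subalgebraCenter_eq_scalarAlgHom_map]
    exact ⟨x, hx, rfl⟩
  rw [Algebra.IsCentral.center_eq_bot, Algebra.mem_bot] at h2
  obtain ⟨k, hk⟩ := h2
  rw [Algebra.mem_bot]
  refine ⟨k, ?_⟩
  have := congrFun (congrFun hk 0) 0
  simpa [Matrix.algebraMap_matrix_apply] using this

theorem exists_matrix_of_finite (F : Type*) [Field F] [Finite F] (R : Type u) [Ring R] [Algebra F R]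
    [Algebra.IsCentral F R] [IsSimpleRing R] [FiniteDimensional F R] :
    ∃ n : ℕ, Nonempty (R ≃ₐ[F] Matrix (Fin n) (Fin n) F) ∧ Module.finrank F R = n ^ 2 := by
  obtain ⟨n, hn, D, _, _, _, hc, ⟨e⟩⟩ := exists_matrix_division F R
  have : Finite D := Module.finite_of_finite F
  let _ := littleWedderburn D
  have hb : Function.Bijective (algebraMap F D) := by
    refine ⟨(algebraMap F D).injective, fun x => ?_⟩
    have h1 : x ∈ Subalgebra.center F D := by
      rw [Subalgebra.mem_center_iff]
      intro y
      exact (mul_comm y x : _)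
    rw [Algebra.IsCentral.center_eq_bot] at h1
    exact Algebra.mem_bot.1 h1
  let e' : R ≃ₐ[F] Matrix (Fin n) (Fin n) F :=
    e.trans <| .mapMatrix <| .symm <| .ofBijective (Algebra.ofId F D) hb
  refine ⟨n, ⟨e'⟩, ?_⟩
  rw [e'.toLinearEquiv.finrank_eq, Module.finrank_matrix]
  simp [pow_two]

theorem iso_of_finite (F : Type*) [Field F] [Finite F] (A B : Type*) [Ring A] [Algebra F A] [Algebra.IsCentral F A]
    [IsSimpleRing A] [FiniteDimensional F A] [Ring B] [Algebra F B] [Algebra.IsCentral F B]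
    [IsSimpleRing B] [FiniteDimensional F B] (hd : Module.finrank F A = Module.finrank F B) :
    Nonempty (A ≃ₐ[F] B) := by
  obtain ⟨n, ⟨e⟩, hn⟩ := exists_matrix_of_finite F A
  obtain ⟨m, ⟨f⟩, hm⟩ := exists_matrix_of_finite F B
  have : n = m := by
    rw [hn, hm] at hd
    exact Nat.pow_left_injective (n := 2) (by norm_num) hd
  subst this
  exact ⟨e.trans f.symm⟩

end Iso
end SplitExt

namespace SplitExt
open MvPolynomial

section Prim
variable {K ι ν : Type*} [Field K] [Fintype ν] [DecidableEq ν]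

/-- primitive polynomial matrices -/
def Prim (g : Matrix ν ν (MvPolynomial ι K)) : Prop := ∀ q, (∀ i j, q ∣ g i j) → IsUnit q

theorem exists_prim (g : Matrix ν ν (FractionRing (MvPolynomial ι K))) (hg : g ≠ 0) :
    ∃ (l : FractionRing (MvPolynomial ι K)) (g0 : Matrix ν ν (MvPolynomial ι K)),
      l ≠ 0 ∧ Prim g0 ∧ g0.map (algebraMap _ (FractionRing (MvPolynomial ι K))) = l • g := by
  classical
  obtain ⟨b, hb⟩ := IsLocalization.exist_integer_multiples_of_finite
    (nonZeroDivisors (MvPolynomial ι K)) (fun x : ν × ν => g x.1 x.2)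
  choose f hf using hb
  obtain ⟨_⟩ : Nonempty (NormalizedGCDMonoid (MvPolynomial ι K)) := inferInstance
  have hne : (Finset.univ : Finset (ν × ν)).Nonempty := by
    by_contra h
    apply hg
    rw [Finset.not_nonempty_iff_eq_empty] at h
    ext i j
    have : (i, j) ∈ (∅ : Finset (ν × ν)) := h ▸ Finset.mem_univ _
    simp at this
  obtain ⟨g0, h1, h2⟩ := Finset.extract_gcd f hne
  set d := Finset.univ.gcd f with hd
  have hb0 : (algebraMap _ (FractionRing (MvPolynomial ι K)) (b : MvPolynomial ι K)) ≠ 0 := by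
    simpa using nonZeroDivisors.ne_zero b.2
  have hdne : d ≠ 0 := by
    intro h0
    apply hg
    ext i j
    have h3 := hf (i, j)
    rw [h1 (i, j) (Finset.mem_univ _), h0, zero_mul, map_zero] at h3
    simp only [Algebra.smul_def] at h3
    rcases mul_eq_zero.1 h3.symm with h | h
    · exact absurd h hb0
    · exact h
  have hd0 : (algebraMap _ (FractionRing (MvPolynomial ι K)) d) ≠ 0 := by
    simpa using hdne
  refine ⟨algebraMap _ _ (b : MvPolynomial ι K) / algebraMap _ _ d, Matrix.of fun i j => g0 (i, j),
    div_ne_zero hb0 hd0, ?_, ?_⟩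
  · intro q hq
    have : q ∣ Finset.univ.gcd g0 := Finset.dvd_gcd fun x _ => hq x.1 x.2
    rw [h2] at this
    exact isUnit_of_dvd_one this
  · ext i j
    have h3 := hf (i, j)
    rw [h1 (i, j) (Finset.mem_univ _), map_mul] at h3
    simp only [Algebra.smul_def] at h3
    simp only [Matrix.map_apply, Matrix.of_apply, Matrix.smul_apply, smul_eq_mul]
    rw [div_mul_eq_mul_div, eq_div_iff hd0, mul_comm, h3]

theorem prim_mul (g : Matrix ν ν (MvPolynomial ι K)) (hg : Prim g)
    (a b : Matrix ν ν (MvPolynomial ι K)) (ha : IsUnit a) (hb : IsUnit b) : Prim (a * g * b) := by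
  intro q hq
  apply hg
  obtain ⟨a, rfl⟩ := ha
  obtain ⟨b, rfl⟩ := hb
  intro i j
  have : g = ((a⁻¹ : (Matrix ν ν (MvPolynomial ι K))ˣ) : Matrix ν ν (MvPolynomial ι K)) * (a * g * b) * ((b⁻¹ : (Matrix ν ν (MvPolynomial ι K))ˣ) : Matrix ν ν (MvPolynomial ι K)) := by
    simp [mul_assoc]
  rw [this, Matrix.mul_apply]
  refine Finset.dvd_sum fun k _ => Dvd.dvd.mul_right ?_ _
  rw [Matrix.mul_apply]
  exact Finset.dvd_sum fun l _ => Dvd.dvd.mul_left (hq _ _) _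

theorem prim_proportional (g h : Matrix ν ν (MvPolynomial ι K)) (hg : Prim g) (hh : Prim h)
    (μ : FractionRing (MvPolynomial ι K))
    (hμ : h.map (algebraMap _ (FractionRing (MvPolynomial ι K))) = μ • g.map (algebraMap _ _)) :
    ∃ k : K, k ≠ 0 ∧ μ = algebraMap K _ k := by
  obtain ⟨u, v, huv, rfl⟩ := IsFractionRing.exists_reduced_fraction (MvPolynomial ι K) μ
  have hv0 : (algebraMap _ (FractionRing (MvPolynomial ι K)) (v : MvPolynomial ι K)) ≠ 0 := by
    simpa using nonZeroDivisors.ne_zero v.2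
  have h1 : ∀ i j, (v : MvPolynomial ι K) * h i j = u * g i j := by
    intro i j
    have := congrFun (congrFun hμ i) j
    simp only [Matrix.map_apply, Matrix.smul_apply, smul_eq_mul, IsFractionRing.mk'_eq_div] at this
    apply IsFractionRing.injective (MvPolynomial ι K) (FractionRing (MvPolynomial ι K))
    rw [map_mul, map_mul, this]
    field_simp
  have hvu : IsUnit (v : MvPolynomial ι K) := hg _ fun i j =>
    huv.symm.dvd_of_dvd_mul_left ⟨h i j, (h1 i j).symm⟩
  have huu : IsUnit u := hh _ fun i j =>
    huv.dvd_of_dvd_mul_left ⟨g i j, (h1 i j)⟩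
  obtain ⟨a, ha, hu⟩ := MvPolynomial.isUnit_iff_eq_C_of_isReduced.1 huu
  obtain ⟨b, hb, hv⟩ := MvPolynomial.isUnit_iff_eq_C_of_isReduced.1 hvu
  refine ⟨a / b, div_ne_zero ha.ne_zero hb.ne_zero, ?_⟩
  rw [IsFractionRing.mk'_eq_div, hu, hv, map_div₀,
    IsScalarTower.algebraMap_apply K (MvPolynomial ι K) (FractionRing (MvPolynomial ι K)),
    IsScalarTower.algebraMap_apply K (MvPolynomial ι K) (FractionRing (MvPolynomial ι K)) b,
    MvPolynomial.algebraMap_eq]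

theorem pow_inj_of_infinite (K : Type*) [Field K] [Infinite K] (a b : ℕ)
    (h : ∀ u : K, u ≠ 0 → u ^ a = u ^ b) : a = b := by
  have : (Polynomial.X : Polynomial K) ^ (a + 1) = Polynomial.X ^ (b + 1) := by
    apply Polynomial.funext
    intro u
    simp only [Polynomial.eval_pow, Polynomial.eval_X]
    by_cases hu : u = 0
    · simp [hu]
    · rw [pow_succ, pow_succ, h u hu]
  have := congrArg Polynomial.natDegree this
  simpa using this

end Prim

section Twist
variable {F K A : Type*} [Field F] [Field K] [Algebra F K] [Ring A] [Algebra F A]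

theorem map_mulK {ν : Type*} [Fintype ν] (σ : K ≃ₐ[F] K) (x y : Matrix ν ν K) :
    (x * y).map σ = x.map σ * y.map σ := Matrix.map_mul (f := (σ : K →+* K))

/-- twist of a representation -/
def twist {ν : Type*} [Fintype ν] [DecidableEq ν] (φ : A →ₐ[F] Matrix ν ν K) (σ : K ≃ₐ[F] K) : A →ₐ[F] Matrix ν ν K :=
  (σ : K →ₐ[F] K).mapMatrix.comp φ

theorem twist_apply {ν : Type*} [Fintype ν] [DecidableEq ν] (φ : A →ₐ[F] Matrix ν ν K) (σ : K ≃ₐ[F] K) (x) : twist φ σ x = (φ x).map σ := rfl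

theorem rep_smooth {ν : Type*} [Fintype ν] [DecidableEq ν] [FiniteDimensional F A] (φ : A →ₐ[F] Matrix ν ν K) : ∃ S : Finset K, ∀ σ : K ≃ₐ[F] K,
    (∀ x ∈ S, σ x = x) → ∀ x, (φ x).map σ = φ x := by
  classical
  let c := Module.finBasis F A
  refine ⟨Finset.univ.image fun x : (ν × ν) × Fin (Module.finrank F A) => φ (c x.2) x.1.1 x.1.2, fun σ hσ x => ?_⟩
  have : (twist φ σ).toLinearMap = φ.toLinearMap := by
    apply c.ext
    intro k
    ext i j
    exact hσ _ (Finset.mem_image.2 ⟨((i, j), k), Finset.mem_univ _, rfl⟩)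
  exact congrArg (fun f : A →ₗ[F] Matrix ν ν K => f x) this

end Twist

section Good
variable {F K ι A : Type*} [Field F] [Field K] [Algebra F K] [Fintype ι] [DecidableEq ι]
  [MulAction (K ≃ₐ[F] K) ι] [Ring A] [Algebra F A]

/-- substitutions compatible with the representation -/
def Good (φ : A →ₐ[F] Matrix ι ι K) (T : Tr F K ι) : Prop :=
  ∀ x, T.a * φ x = (φ x).map T.s * T.a

theorem Good.mul {φ : A →ₐ[F] Matrix ι ι K} {T U : Tr F K ι} (hT : Good φ T) (hU : Good φ U) :
    Good φ (T.mul U) := by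
  intro x
  change U.a.map T.s * T.a * φ x = (φ x).map (T.s * U.s : K ≃ₐ[F] K) * (U.a.map T.s * T.a)
  have : (φ x).map (T.s * U.s : K ≃ₐ[F] K) = ((φ x).map U.s).map T.s := rfl
  rw [mul_assoc, hT, ← mul_assoc, ← mul_assoc, this, ← map_mulK, ← map_mulK, hU]

theorem Good.tor (φ : A →ₐ[F] Matrix ι ι K) (t : ι → K) (ht : ∀ i, t i ≠ 0) :
    Good φ (Tr.tor (F := F) t ht) := by
  intro x
  have : (φ x).map (1 : K ≃ₐ[F] K) = φ x := by ext i j; simp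
  simp [Tr.tor, this]

theorem Good.exists [Algebra.IsCentral F A] [IsSimpleRing A] [FiniteDimensional F A] [Nonempty ι]
    (hd : Module.finrank F A = Fintype.card ι ^ 2) (φ : A →ₐ[F] Matrix ι ι K) (σ : K ≃ₐ[F] K) :
    ∃ T : Tr F K ι, Good φ T ∧ T.s = σ ∧ T.t = 1 := by
  obtain ⟨g, hg, hx⟩ := skolem_noether hd φ (twist φ σ)
  exact ⟨⟨σ, g, 1, hg, by simp⟩, hx, rfl, rfl⟩

theorem Good.eq_tor [Algebra.IsCentral F A] [IsSimpleRing A] [FiniteDimensional F A] [Nonempty ι]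
    (hd : Module.finrank F A = Fintype.card ι ^ 2) (φ : A →ₐ[F] Matrix ι ι K) (T U : Tr F K ι)
    (hT : Good φ T) (hU : Good φ U) (h : U.s = T.s) :
    ∃ t ht, PsiM U = (PsiM T).comp (PsiM (Tr.tor (F := F) t ht)) := by
  obtain ⟨k, hk⟩ := intertwiner_unique hd φ (twist φ T.s) T.a U.a T.ha hT
    (by intro x; rw [twist_apply, ← h]; exact hU x)
  have hk0 : k ≠ 0 := by
    rintro rfl
    have := U.ha
    rw [hk, zero_smul] at this
    exact not_isUnit_zero this
  have hr : ∀ i, T.s.symm (k * U.t i / T.t i) ≠ 0 := by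
    intro i
    simp [hk0, U.ht, T.ht]
  refine ⟨_, hr, ?_⟩
  rw [← PsiM_mul]
  have : Psi U = Psi (T.mul (Tr.tor (F := F) _ hr)) := by
    apply MvPolynomial.ringHom_ext
    · intro x; simp [h, Tr.mul, Tr.tor]
    · rintro ⟨j, i⟩
      rw [Psi_X, Psi_X]
      simp only [Tr.mul, Tr.tor, h, hk, AlgEquiv.apply_symm_apply, one_smul, mul_one]
      have h1 : k * U.t i / T.t i * T.t i = U.t i * k := by
        field_simp [T.ht i]
      rw [h1]
      simp only [Matrix.smul_apply, smul_eq_mul, map_mul, Finset.mul_sum, mul_assoc, Matrix.map_one _ (map_zero _) (map_one _), Matrix.one_mul]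
  unfold PsiM
  congr 1

end Good
end SplitExt

namespace SplitExt
open MvPolynomial

/-- the rational function field -/
abbrev FM (K ι : Type*) [Field K] : Type _ := FractionRing (MvPolynomial (ι × ι) K)

section CM
variable {F K ν : Type*} (ι : Type*) [Field F] [Field K] [Algebra F K] [Fintype ι] [DecidableEq ι]
  [Fintype ν] [DecidableEq ν]

/-- constant matrices -/
noncomputable def cM (b : Matrix ν ν K) : Matrix ν ν (FM K ι) := b.map (algebraMap K (FM K ι))

theorem cM_mul (a b : Matrix ν ν K) : cM ι (a * b) = cM ι a * cM ι b := Matrix.map_mul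
theorem cM_one : cM ι (1 : Matrix ν ν K) = 1 := Matrix.map_one _ (map_zero _) (map_one _)
theorem cM_smul (k : K) (b : Matrix ν ν K) : cM ι (k • b) = (algebraMap K (FM K ι) k) • cM ι b := by
  ext i j; simp [cM]
theorem cM_unit {b : Matrix ν ν K} (h : IsUnit b) : IsUnit (cM ι b) := isUnit_map _ h

/-- constant representation -/
noncomputable def repM {A : Type*} [Ring A] [Algebra F A] (φ : A →ₐ[F] Matrix ν ν K) :
    A →ₐ[F] Matrix ν ν (FM K ι) :=
  (IsScalarTower.toAlgHom F K (FM K ι)).mapMatrix.comp φ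

theorem repM_apply {A : Type*} [Ring A] [Algebra F A] (φ : A →ₐ[F] Matrix ν ν K) (x : A) :
    repM ι φ x = cM ι (φ x) := rfl

variable {ι}
theorem cM_Psi [MulAction (K ≃ₐ[F] K) ι] (T : Tr F K ι) (b : Matrix ν ν K) :
    (cM ι b).map (PsiM T) = cM ι (b.map T.s) := by
  ext i j
  simp [cM]

theorem map_mulM [MulAction (K ≃ₐ[F] K) ι] (T : Tr F K ι) (a b : Matrix ν ν (FM K ι)) :
    (a * b).map (PsiM T) = a.map (PsiM T) * b.map (PsiM T) := Matrix.map_mul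

theorem map_smulM [MulAction (K ≃ₐ[F] K) ι] (T : Tr F K ι) (k : FM K ι) (b : Matrix ν ν (FM K ι)) :
    (k • b).map (PsiM T) = PsiM T k • b.map (PsiM T) := by
  ext i j; simp

end CM

section Main
variable {F K ι ν A C1 C2 : Type*} [Field F] [Field K] [Algebra F K] [Fintype ι] [DecidableEq ι]
  [MulAction (K ≃ₐ[F] K) ι] [Ring A] [Algebra F A]
  [Fintype ν] [DecidableEq ν] [Nonempty ν] [Nonempty ι]
  [Ring C1] [Algebra F C1] [Algebra.IsCentral F C1] [IsSimpleRing C1] [FiniteDimensional F C1]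
  [Ring C2] [Algebra F C2] 
  (φ : A →ₐ[F] Matrix ι ι K) (φ1 : C1 →ₐ[F] Matrix ν ν K) (φ2 : C2 →ₐ[F] Matrix ν ν K)
  (Y : C1 →ₐ[F] Matrix ν ν (FM K ι))

/-- `b` implements `σ` -/
def Impl {C : Type*} [Ring C] [Algebra F C] (ψ : C →ₐ[F] Matrix ν ν K) (σ : K ≃ₐ[F] K) (b : Matrix ν ν K) : Prop :=
  IsUnit b ∧ ∀ x, b * (ψ x).map σ = ψ x * b

theorem Impl.one {C : Type*} [Ring C] [Algebra F C] (ψ : C →ₐ[F] Matrix ν ν K) :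
    Impl ψ 1 1 := by
  refine ⟨isUnit_one, fun x => ?_⟩
  have : (ψ x).map (1 : K ≃ₐ[F] K) = ψ x := by ext i j; simp
  rw [this, one_mul, mul_one]

theorem Impl.exists {C : Type*} [Ring C] [Algebra F C] [Algebra.IsCentral F C] [IsSimpleRing C] [FiniteDimensional F C]
    (hd : Module.finrank F C = Fintype.card ν ^ 2) (ψ : C →ₐ[F] Matrix ν ν K) (σ : K ≃ₐ[F] K) :
    ∃ b, Impl ψ σ b := by
  obtain ⟨g, hg, h⟩ := skolem_noether hd (twist ψ σ) ψ
  exact ⟨g, hg, h⟩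

theorem Impl.unique {C : Type*} [Ring C] [Algebra F C] [Algebra.IsCentral F C] [IsSimpleRing C] [FiniteDimensional F C]
    (hd : Module.finrank F C = Fintype.card ν ^ 2) (ψ : C →ₐ[F] Matrix ν ν K) (σ : K ≃ₐ[F] K)
    (b c : Matrix ν ν K) (hb : Impl ψ σ b) (hc : Impl ψ σ c) : ∃ k : K, c = k • b :=
  intertwiner_unique hd (twist ψ σ) ψ b c hb.1 hb.2 hc.2

/-- the intertwiner relation -/
def Tw (g : Matrix ν ν (FM K ι)) : Prop := IsUnit g ∧ ∀ x, g * repM ι φ1 x = Y x * g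

/-- compatibility of `Y` with the substitutions -/
def Comp : Prop := ∀ T, Good φ T → ∀ b2, Impl φ2 T.s b2 → ∀ x,
  cM ι b2 * (Y x).map (PsiM T) = Y x * cM ι b2

variable {φ φ1 φ2 Y}

theorem Tw.smul {g : Matrix ν ν (FM K ι)} (hg : Tw φ1 Y g) (k : FM K ι) (hk : k ≠ 0) : Tw φ1 Y (k • g) := by
  refine ⟨hg.1.smul (Units.mk0 k hk), fun x => ?_⟩
  rw [Matrix.smul_mul, hg.2, Matrix.mul_smul]

theorem step1 (hd1 : Module.finrank F C1 = Fintype.card ν ^ 2) (hY : Comp φ φ2 Y)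
    {g : Matrix ν ν (FM K ι)} (hg : Tw φ1 Y g) (T : Tr F K ι) (hT : Good φ T)
    (b1 b2 : Matrix ν ν K) (h1 : Impl φ1 T.s b1) (h2 : Impl φ2 T.s b2) :
    ∃ μ : FM K ι, μ ≠ 0 ∧ cM ι b2 * g.map (PsiM T) = μ • (g * cM ι b1) := by
  obtain ⟨c, hc⟩ := cM_unit ι h1.1
  have hcx : ∀ x, (c : Matrix ν ν (FM K ι)) * cM ι ((φ1 x).map T.s) = cM ι (φ1 x) * c := by
    intro x
    rw [hc, ← cM_mul, h1.2, cM_mul]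
  have hcx' : ∀ x, ((c⁻¹ : (Matrix ν ν (FM K ι))ˣ) : Matrix ν ν (FM K ι)) * cM ι (φ1 x) =
      cM ι ((φ1 x).map T.s) * ((c⁻¹ : (Matrix ν ν (FM K ι))ˣ) : Matrix ν ν (FM K ι)) := by
    intro x
    rw [Units.inv_mul_eq_iff_eq_mul, ← mul_assoc, hcx, mul_assoc, Units.mul_inv, mul_one]
  have hgT : IsUnit (g.map (PsiM T)) := isUnit_map _ hg.1
  obtain ⟨μ, hμ⟩ := intertwiner_unique hd1 (repM ι φ1) Y g
    (cM ι b2 * g.map (PsiM T) * ((c⁻¹ : (Matrix ν ν (FM K ι))ˣ) : Matrix ν ν (FM K ι))) hg.1 hg.2 (by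
      intro x
      rw [repM_apply, mul_assoc, hcx', ← cM_Psi, ← mul_assoc, mul_assoc (cM ι b2), ← map_mulM,
        ← repM_apply, hg.2, map_mulM, ← mul_assoc, hY T hT b2 h2, ← mul_assoc, ← mul_assoc])
  refine ⟨μ, ?_, ?_⟩
  · rintro rfl
    rw [zero_smul] at hμ
    exact not_isUnit_zero (hμ ▸ (((cM_unit ι h2.1).mul hgT).mul (Units.isUnit c⁻¹)))
  · rw [← hc, ← Matrix.smul_mul, ← hμ, Units.inv_mul_cancel_right]

theorem step2 (hd1 : Module.finrank F C1 = Fintype.card ν ^ 2) (hY : Comp φ φ2 Y)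
    {g : Matrix ν ν (MvPolynomial (ι × ι) K)} (hp : Prim g)
    (hg : Tw φ1 Y (g.map (algebraMap _ (FM K ι)))) (T : Tr F K ι) (hT : Good φ T)
    (b1 b2 : Matrix ν ν K) (h1 : Impl φ1 T.s b1) (h2 : Impl φ2 T.s b2) :
    ∃ k : K, k ≠ 0 ∧ cM ι b2 * (g.map (algebraMap _ (FM K ι))).map (PsiM T) =
      algebraMap K (FM K ι) k • (g.map (algebraMap _ (FM K ι)) * cM ι b1) := by
  obtain ⟨μ, hμ0, hμ⟩ := step1 hd1 hY hg T hT b1 b2 h1 h2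
  obtain ⟨c, rfl⟩ := h1.1
  have hP : Prim (g.map (Psi T)) := by
    intro q hq
    have : IsUnit ((PsiE T).symm q) := by
      apply hp
      intro i j
      have := map_dvd (PsiE T).symm (hq i j)
      rwa [Matrix.map_apply, ← PsiE_apply, RingEquiv.symm_apply_apply] at this
    simpa using this.map (PsiE T)
  have hP2 := prim_mul _ hP (b2.map C) (((c⁻¹ : (Matrix ν ν K)ˣ) : Matrix ν ν K).map C) (isUnit_map _ h2.1) (isUnit_map _ (Units.isUnit c⁻¹))
  have hcC : ∀ b : Matrix ν ν K, (b.map (C : K →+* MvPolynomial (ι × ι) K)).map (algebraMap _ (FM K ι)) = cM ι b := by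
    intro b
    ext i j
    simp only [Matrix.map_apply, cM]
    rw [IsScalarTower.algebraMap_apply K (MvPolynomial (ι × ι) K), MvPolynomial.algebraMap_eq]
  have hgP : (g.map (Psi T)).map (algebraMap _ (FM K ι)) = (g.map (algebraMap _ (FM K ι))).map (PsiM T) := by
    ext i j
    simp
  obtain ⟨k, hk0, hk⟩ := prim_proportional _ _ hp hP2 μ (by
    rw [Matrix.map_mul, Matrix.map_mul, hcC, hcC, hgP, hμ, Matrix.smul_mul, mul_assoc, ← cM_mul, Units.mul_inv, cM_one, mul_one])
  exact ⟨k, hk0, by rw [hμ, hk]⟩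

end Main
end SplitExt

namespace SplitExt
open MvPolynomial
section Main
variable {F K ι ν A C1 C2 : Type*} [Field F] [Field K] [Algebra F K] [Fintype ι] [DecidableEq ι]
  [MulAction (K ≃ₐ[F] K) ι] [Ring A] [Algebra F A]
  [Fintype ν] [DecidableEq ν] [Nonempty ν] [Nonempty ι]
  [Ring C1] [Algebra F C1] [Algebra.IsCentral F C1] [IsSimpleRing C1] [FiniteDimensional F C1]
  [Ring C2] [Algebra F C2] 
  (φ : A →ₐ[F] Matrix ι ι K) (φ1 : C1 →ₐ[F] Matrix ν ν K) (φ2 : C2 →ₐ[F] Matrix ν ν K)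
  (Y : C1 →ₐ[F] Matrix ν ν (FM K ι))

variable {φ φ1 φ2 Y}

theorem tor_cM (t : ι → K) (ht) (b : Matrix ν ν K) : (cM ι b).map (PsiM (Tr.tor (F := F) t ht)) = cM ι b := by
  rw [cM_Psi]
  have : b.map (Tr.tor (F := F) t ht).s = b := by ext i j; simp [Tr.tor]
  rw [this]
theorem map_mul_Psi (T U : Tr F K ι) (G : Matrix ν ν (FM K ι)) : G.map (PsiM (T.mul U)) = (G.map (PsiM U)).map (PsiM T) := by
  ext i j
  rw [PsiM_mul]; simp
theorem step3 (hd : Module.finrank F A = Fintype.card ι ^ 2) [Algebra.IsCentral F A] [IsSimpleRing A]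
    [FiniteDimensional F A] [Infinite K] [MulAction.IsPretransitive (K ≃ₐ[F] K) ι]
    (hd1 : Module.finrank F C1 = Fintype.card ν ^ 2) 
    [Algebra.IsCentral F C2] [IsSimpleRing C2] [FiniteDimensional F C2]
    (hd2 : Module.finrank F C2 = Fintype.card ν ^ 2) (hY : Comp φ φ2 Y) :
    ∃ g : Matrix ν ν (FM K ι), Tw φ1 Y g ∧ (∀ t ht, g.map (PsiM (Tr.tor (F := F) t ht)) = g) ∧
      ∀ T, Good φ T → ∀ b1 b2, Impl φ1 T.s b1 → Impl φ2 T.s b2 →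
        ∃ k : K, k ≠ 0 ∧ cM ι b2 * g.map (PsiM T) = algebraMap K (FM K ι) k • (g * cM ι b1) := by
  classical
  obtain ⟨g1, hg1u, hg1x⟩ := skolem_noether hd1 (repM ι φ1) Y
  obtain ⟨l, g, hl, hp, hlg⟩ := exists_prim g1 hg1u.ne_zero
  have hg : Tw φ1 Y (g.map (algebraMap _ (FM K ι))) := by
    rw [hlg]
    exact Tw.smul ⟨hg1u, hg1x⟩ l hl
  have hgne : g.map (algebraMap _ (FM K ι)) ≠ 0 := hg.1.ne_zero
  -- a monomial
  obtain ⟨α, β, hαβ⟩ : ∃ α β, g α β ≠ 0 := by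
    by_contra hcon
    push Not at hcon
    apply hgne
    ext i j
    simp [hcon]
  obtain ⟨m0, hm0⟩ := MvPolynomial.ne_zero_iff.1 hαβ
  let d : ι → ℕ := fun i => ∑ j, m0 (j, i)
  have hprod : ∀ t : ι → K, ∏ x : ι × ι, t x.2 ^ m0 x = ∏ i, t i ^ d i := by
    intro t
    rw [Fintype.prod_prod_type_right]
    refine Finset.prod_congr rfl fun i _ => ?_
    simp only [d, Finset.prod_pow_eq_pow_sum]
  have hinj := IsFractionRing.injective (MvPolynomial (ι × ι) K) (FM K ι)
  have hchi : ∀ t ht, (g.map (algebraMap _ (FM K ι))).map (PsiM (Tr.tor (F := F) t ht)) =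
      algebraMap K (FM K ι) (∏ i, t i ^ d i) • g.map (algebraMap _ (FM K ι)) := by
    intro t ht
    obtain ⟨k, hk0, hk⟩ := step2 hd1 hY hp hg (Tr.tor (F := F) t ht) (Good.tor φ t ht) 1 1
      (Impl.one φ1) (Impl.one φ2)
    rw [cM_one, one_mul, mul_one] at hk
    have h1 := congrFun (congrFun hk α) β
    simp only [Matrix.map_apply, PsiM_algebraMap, Matrix.smul_apply, smul_eq_mul] at h1
    rw [IsScalarTower.algebraMap_apply K (MvPolynomial (ι × ι) K) (FM K ι), ← map_mul] at h1
    have h2 := congrArg (coeff m0) (hinj h1)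
    rw [coeff_tor, MvPolynomial.algebraMap_eq, coeff_C_mul, hprod] at h2
    rw [hk, mul_right_cancel₀ hm0 h2]
  have hdσ : ∀ (σ : K ≃ₐ[F] K) (i : ι), d i = d (σ • i) := by
    intro σ i
    obtain ⟨T, hT, hTs, hTt⟩ := Good.exists hd φ σ
    obtain ⟨b1, hb1⟩ := Impl.exists hd1 φ1 T.s
    obtain ⟨b2, hb2⟩ := Impl.exists hd2 φ2 T.s
    obtain ⟨k, hk0, hk⟩ := step2 hd1 hY hp hg T hT b1 b2 hb1 hb2
    apply pow_inj_of_infinite K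
    intro u hu
    let t : ι → K := Function.update 1 i u
    have ht : ∀ j, t j ≠ 0 := by
      intro j
      by_cases h : j = i
      · subst h; simpa [t] using hu
      · simp [t, h]
    let t' : ι → K := Function.update 1 (σ • i) (σ u)
    have ht' : ∀ j, t' j ≠ 0 := by
      intro j
      by_cases h : j = σ • i
      · subst h; simpa [t'] using hu
      · simp [t', h]
    have hrel : T.mul (Tr.tor (F := F) t ht) = (Tr.tor (F := F) t' ht').mul T := by
      apply Tr.ext'
      · simp [Tr.mul, Tr.tor]
      · have h1 : T.a.map ((1 : K ≃ₐ[F] K) : K →+* K) = T.a := by ext; simp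
        simp only [Tr.mul, Tr.tor, h1, mul_one, Matrix.map_one _ (map_zero _) (map_one _), one_mul]
      · funext j
        simp only [Tr.mul, Tr.tor, hTs, hTt, Pi.one_apply, mul_one, map_one, one_mul]
        by_cases h : j = i
        · subst h; simp [t, t']
        · simp [t, t', h]
    set G := g.map (algebraMap _ (FM K ι)) with hG
    have e1 : G.map (PsiM (T.mul (Tr.tor (F := F) t ht))) = algebraMap K (FM K ι) (σ (∏ i, t i ^ d i)) • G.map (PsiM T) := by
      rw [map_mul_Psi, hchi, map_smulM, PsiM_algebraMapK, hTs]
    have e2 : cM ι b2 * G.map (PsiM ((Tr.tor (F := F) t' ht').mul T)) = algebraMap K (FM K ι) (∏ i, t' i ^ d i) • (cM ι b2 * G.map (PsiM T)) := by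
      rw [map_mul_Psi]
      conv_lhs => rw [← tor_cM (F := F) t' ht' b2]
      rw [← map_mulM, hk, map_smulM, map_mulM, tor_cM, hchi, PsiM_algebraMapK, Matrix.smul_mul, smul_comm]
      have h3 : (Tr.tor (F := F) t' ht').s k = k := by simp [Tr.tor]
      rw [h3]
    rw [← hrel, e1, Matrix.mul_smul] at e2
    have hne : cM ι b2 * G.map (PsiM T) ≠ 0 := ((cM_unit ι hb2.1).mul (isUnit_map _ hg.1)).ne_zero
    have e3 := (algebraMap K (FM K ι)).injective (smul_left_injective _ hne e2)
    have p1 : ∏ j, t j ^ d j = u ^ d i := by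
      rw [Finset.prod_eq_single i]
      · simp [t]
      · intro j _ hj; simp [t, hj]
      · simp
    have p2 : ∏ j, t' j ^ d j = σ u ^ d (σ • i) := by
      rw [Finset.prod_eq_single (σ • i)]
      · simp [t']
      · intro j _ hj; simp [t', hj]
      · simp
    rw [p1, p2, ← map_pow] at e3
    exact σ.injective e3
  obtain ⟨i0⟩ := ‹Nonempty ι›
  have hd0 : ∀ i, d i = d i0 := by
    intro i
    obtain ⟨σ, rfl⟩ := MulAction.exists_smul_eq (K ≃ₐ[F] K) i0 i
    exact (hdσ σ i0).symm
  have hD := det_XM_ne_zero (K := K) (ι := ι)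
  have hDd : ((XM K ι).det ^ d i0)⁻¹ ≠ 0 := inv_ne_zero (pow_ne_zero _ hD)
  refine ⟨((XM K ι).det ^ d i0)⁻¹ • g.map (algebraMap _ (FM K ι)), hg.smul _ hDd, ?_, ?_⟩
  · intro t ht
    rw [map_smulM, hchi, smul_smul, map_inv₀, map_pow, PsiM_det_tor]
    congr 1
    have : ∏ i, t i ^ d i = (∏ i, t i) ^ d i0 := by
      rw [← Finset.prod_pow]
      exact Finset.prod_congr rfl fun i _ => by rw [hd0 i]
    have h0 : algebraMap K (FM K ι) (∏ i, t i) ≠ 0 := by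
      rw [Ne, map_eq_zero]
      exact Finset.prod_ne_zero_iff.2 fun i _ => ht i
    rw [this, mul_pow, map_pow]
    field_simp
  · intro T hT b1 b2 hb1 hb2
    obtain ⟨k, hk0, hk⟩ := step2 hd1 hY hp hg T hT b1 b2 hb1 hb2
    obtain ⟨κ, hκ0, hκ⟩ := PsiM_det T
    refine ⟨k / κ ^ d i0, div_ne_zero hk0 (pow_ne_zero _ hκ0), ?_⟩
    rw [map_smulM, Matrix.mul_smul, hk, map_inv₀, map_pow, hκ, Matrix.smul_mul, smul_smul, smul_smul]
    congr 1
    have h0 : algebraMap K (FM K ι) κ ≠ 0 := by simpa using hκ0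
    rw [map_div₀, map_pow, mul_pow]
    field_simp

end Main
end SplitExt

namespace SplitExt
open MvPolynomial

theorem Impl.smul {F K ν C : Type*} [Field F] [Field K] [Algebra F K] [Fintype ν] [DecidableEq ν]
    [Ring C] [Algebra F C] {ψ : C →ₐ[F] Matrix ν ν K} {σ : K ≃ₐ[F] K}
    {b : Matrix ν ν K} (hb : Impl ψ σ b) (k : K) (hk : k ≠ 0) : Impl ψ σ (k • b) := by
  refine ⟨hb.1.smul (Units.mk0 k hk), fun x => ?_⟩
  rw [Matrix.smul_mul, hb.2, Matrix.mul_smul]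

theorem Impl.mul {F K ν C : Type*} [Field F] [Field K] [Algebra F K] [Fintype ν] [DecidableEq ν]
    [Ring C] [Algebra F C] {ψ : C →ₐ[F] Matrix ν ν K} {σ τ : K ≃ₐ[F] K}
    {b c : Matrix ν ν K} (hb : Impl ψ σ b) (hc : Impl ψ τ c) : Impl ψ (σ * τ) (b * c.map σ) := by
  refine ⟨hb.1.mul (isUnit_map (σ : K →+* K) hc.1), fun x => ?_⟩
  have : (ψ x).map (σ * τ : K ≃ₐ[F] K) = ((ψ x).map τ).map σ := rfl
  rw [this, mul_assoc, ← map_mulK, hc.2, map_mulK, ← mul_assoc, hb.2, mul_assoc]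

theorem step4 {F K ι ν A C1 C2 : Type*} [Field F] [Field K] [Algebra F K] [IsGalois F K] [Infinite F]
    [Fintype ι] [DecidableEq ι]
    [MulAction (K ≃ₐ[F] K) ι] [Ring A] [Algebra F A]
    [Fintype ν] [DecidableEq ν] [Nonempty ν] [Nonempty ι]
    [Ring C1] [Algebra F C1] [Algebra.IsCentral F C1] [IsSimpleRing C1] [FiniteDimensional F C1]
    [Ring C2] [Algebra F C2] [Algebra.IsCentral F C2] [IsSimpleRing C2] [FiniteDimensional F C2]
    (φ : A →ₐ[F] Matrix ι ι K) (φ1 : C1 →ₐ[F] Matrix ν ν K) (φ2 : C2 →ₐ[F] Matrix ν ν K)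
    (Y : C1 →ₐ[F] Matrix ν ν (FM K ι))
    (hd : Module.finrank F A = Fintype.card ι ^ 2) [Algebra.IsCentral F A] [IsSimpleRing A]
    [FiniteDimensional F A] [MulAction.IsPretransitive (K ≃ₐ[F] K) ι]
    (hd1 : Module.finrank F C1 = Fintype.card ν ^ 2)
    (hd2 : Module.finrank F C2 = Fintype.card ν ^ 2) (hY : Comp φ φ2 Y)
    (hsι : ∃ S : Finset K, ∀ σ : K ≃ₐ[F] K, (∀ x ∈ S, σ x = x) → ∀ i : ι, σ • i = i) :
    Nonempty (C1 ≃ₐ[F] C2) := by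
  classical
  have : Infinite K := Infinite.of_injective _ (algebraMap F K).injective
  obtain ⟨g, hg, hgt, hgT⟩ := step3 hd hd1 hd2 hY (φ1 := φ1)
  have hgu : ∀ T : Tr F K ι, IsUnit (g.map (PsiM T)) := fun T => isUnit_map _ hg.1
  have hdep : ∀ T U, Good φ T → Good φ U → U.s = T.s → g.map (PsiM U) = g.map (PsiM T) := by
    intro T U hT hU h
    obtain ⟨t, ht, h1⟩ := Good.eq_tor hd φ T U hT hU h
    have : g.map (PsiM U) = (g.map (PsiM (Tr.tor (F := F) t ht))).map (PsiM T) := by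
      rw [h1]; ext i j; simp
    rw [this, hgt]
  refine descend_iso hd1 hd2 φ1 φ2 (fun σ b1 b2 => Impl φ1 σ b1 ∧ Impl φ2 σ b2 ∧
    ∃ T, Good φ T ∧ T.s = σ ∧ cM ι b2 * g.map (PsiM T) = g * cM ι b1)
    (fun _ _ _ h => h.1.1) (fun _ _ _ h => h.2.1.1) (fun _ _ _ h => h.1.2) (fun _ _ _ h => h.2.1.2)
    ?_ ?_ ?_ ?_
  · intro σ
    obtain ⟨T, hT, rfl, -⟩ := Good.exists hd φ σ
    obtain ⟨b1, hb1⟩ := Impl.exists hd1 φ1 T.s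
    obtain ⟨b2, hb2⟩ := Impl.exists hd2 φ2 T.s
    obtain ⟨k, hk0, hk⟩ := hgT T hT b1 b2 hb1 hb2
    refine ⟨k • b1, b2, hb1.smul k hk0, hb2, T, hT, rfl, ?_⟩
    rw [hk, cM_smul, Matrix.mul_smul]
  · rintro σ b1 b2 c1 c2 ⟨hb1, hb2, T, hT, hTs, h⟩ ⟨hc1, hc2, U, hU, hUs, h'⟩
    obtain ⟨k1, rfl⟩ := Impl.unique hd1 φ1 σ b1 c1 hb1 hc1
    obtain ⟨k2, rfl⟩ := Impl.unique hd2 φ2 σ b2 c2 hb2 hc2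
    rw [hdep T U hT hU (hUs.trans hTs.symm), cM_smul, cM_smul, Matrix.smul_mul, h, Matrix.mul_smul] at h'
    have hne : g * cM ι b1 ≠ 0 := (hg.1.mul (cM_unit ι hb1.1)).ne_zero
    have := (algebraMap K (FM K ι)).injective (smul_left_injective _ hne h')
    exact ⟨k1, rfl, by rw [this]⟩
  · rintro σ τ b1 b2 c1 c2 ⟨hb1, hb2, T, hT, rfl, h⟩ ⟨hc1, hc2, U, hU, rfl, h'⟩
    refine ⟨hb1.mul hc1, hb2.mul hc2, T.mul U, hT.mul hU, rfl, ?_⟩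
    rw [map_mul_Psi, cM_mul, cM_mul, ← cM_Psi, ← cM_Psi, mul_assoc, ← map_mulM, h', map_mulM,
      ← mul_assoc, h, mul_assoc]
  · obtain ⟨S0, h0⟩ := hsι
    obtain ⟨S1, h1⟩ := rep_smooth φ
    obtain ⟨S2, h2⟩ := rep_smooth φ1
    obtain ⟨S3, h3⟩ := rep_smooth φ2
    choose S4 h4 using fun x : ν × ν => PsiM_smooth (F := F) (g x.1 x.2)
    refine ⟨S0 ∪ S1 ∪ S2 ∪ S3 ∪ Finset.univ.biUnion S4, fun σ hσ => ?_⟩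
    have hs0 := h0 σ fun x hx => hσ x (by simp [hx])
    have hs1 := h1 σ fun x hx => hσ x (by simp [hx])
    have hs2 := h2 σ fun x hx => hσ x (by simp [hx])
    have hs3 := h3 σ fun x hx => hσ x (by simp [hx])
    refine ⟨⟨isUnit_one, fun x => by rw [hs2, one_mul, mul_one]⟩,
      ⟨isUnit_one, fun x => by rw [hs3, one_mul, mul_one]⟩,
      ⟨σ, 1, 1, isUnit_one, fun _ => one_ne_zero⟩, fun x => ?_, rfl, ?_⟩
    · change 1 * φ x = (φ x).map σ * 1
      rw [hs1, one_mul, mul_one]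
    · rw [cM_one, one_mul, mul_one]
      ext i j
      rw [Matrix.map_apply]
      refine h4 (i, j) _ rfl rfl hs0 fun x hx => hσ x ?_
      simp only [Finset.mem_union, Finset.mem_biUnion]
      exact Or.inr ⟨(i, j), Finset.mem_univ _, hx⟩

end SplitExt

namespace SplitExt
open MvPolynomial

theorem exists_lift {F E M C ν : Type*} [Field F] [Field E] [Field M] [Algebra F E] [Algebra F M]
    [Algebra E M] [IsScalarTower F E M] [Ring C] [Algebra F C] [Fintype ν] [DecidableEq ν]
    (φ : C →ₐ[F] Matrix ν ν M) : ∃ Λ : (E ⊗[F] C) →ₐ[E] Matrix ν ν M,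
      ∀ e c, Λ (e ⊗ₜ c) = algebraMap E M e • φ c := by
  have hc : ∀ (m : E) (a : C), Commute (Algebra.ofId E (Matrix ν ν M) m) (φ a) :=
    fun m a => Algebra.commutes m (φ a)
  refine ⟨Algebra.TensorProduct.lift (Algebra.ofId E (Matrix ν ν M)) φ hc, fun e c => ?_⟩
  rw [Algebra.TensorProduct.lift_tmul (Algebra.ofId E (Matrix ν ν M)) φ hc]
  rw [Algebra.ofId_apply, IsScalarTower.algebraMap_apply E M (Matrix ν ν M), ← Algebra.smul_def]

section Fix
variable {F K ι A : Type*} [Field F] [Field K] [Algebra F K] [Fintype ι] [DecidableEq ι]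
  [MulAction (K ≃ₐ[F] K) ι] [Ring A] [Algebra F A]

/-- the field `E` -/
noncomputable def EF (φ : A →ₐ[F] Matrix ι ι K) : IntermediateField F (FM K ι) where
  carrier := {f | ∀ T, Good φ T → PsiM T f = f}
  mul_mem' := fun {a b} ha hb T hT => by rw [map_mul, ha T hT, hb T hT]
  add_mem' := fun {a b} ha hb T hT => by rw [map_add, ha T hT, hb T hT]
  algebraMap_mem' := fun r T _ => PsiM_algebraMapF T r
  inv_mem' := fun a ha T hT => by rw [map_inv₀, ha T hT]

theorem mem_EF (φ : A →ₐ[F] Matrix ι ι K) (f : FM K ι) :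
    f ∈ EF φ ↔ ∀ T, Good φ T → PsiM T f = f := Iff.rfl

theorem step5 {C1 C2 : Type*} [IsGalois F K] [IsSepClosed K] [Infinite F] [Nonempty ι]
    [Ring C1] [Algebra F C1] [Algebra.IsCentral F C1] [IsSimpleRing C1] [FiniteDimensional F C1]
    [Ring C2] [Algebra F C2] [Algebra.IsCentral F C2] [IsSimpleRing C2] [FiniteDimensional F C2]
    (φ : A →ₐ[F] Matrix ι ι K)
    (hd : Module.finrank F A = Fintype.card ι ^ 2) [Algebra.IsCentral F A] [IsSimpleRing A]
    [FiniteDimensional F A] [MulAction.IsPretransitive (K ≃ₐ[F] K) ι]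
    (hsι : ∃ S : Finset K, ∀ σ : K ≃ₐ[F] K, (∀ x ∈ S, σ x = x) → ∀ i : ι, σ • i = i)
    (ψ : (EF φ ⊗[F] C1) ≃ₐ[EF φ] (EF φ ⊗[F] C2)) : Nonempty (C1 ≃ₐ[F] C2) := by
  obtain ⟨n, hn, hn2, ⟨φ1⟩⟩ := exists_splitting F K C1
  obtain ⟨m, hm, hm2, ⟨φ2⟩⟩ := exists_splitting F K C2
  have hdim := ψ.toLinearEquiv.finrank_eq
  rw [Module.finrank_baseChange, Module.finrank_baseChange, hn2, hm2] at hdim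
  have hnm : n = m := Nat.pow_left_injective (n := 2) (by norm_num) hdim
  subst hnm
  have : Nonempty (Fin n) := ⟨⟨0, hn⟩⟩
  obtain ⟨Λ, hΛ'⟩ := exists_lift (E := EF φ) (repM ι φ2)
  have hΛ : ∀ e c, Λ (e ⊗ₜ c) = (e : FM K ι) • cM ι (φ2 c) := hΛ'
  let Y : C1 →ₐ[F] Matrix (Fin n) (Fin n) (FM K ι) :=
    ((Λ.comp ψ.toAlgHom).restrictScalars F).comp Algebra.TensorProduct.includeRight
  refine step4 φ φ1 φ2 Y hd (by simpa using hn2) (by simpa using hm2) ?_ hsι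
  intro T hT b2 hb2 x
  change cM ι b2 * (Λ (ψ (1 ⊗ₜ x))).map (PsiM T) = Λ (ψ (1 ⊗ₜ x)) * cM ι b2
  generalize ψ (1 ⊗ₜ x) = w
  induction w with
  | zero => simp
  | add x y hx hy =>
    rw [map_add, Matrix.map_add _ (map_add _), mul_add, add_mul, hx, hy]
  | tmul e c =>
    rw [hΛ, map_smulM, e.2 T hT, cM_Psi, Matrix.mul_smul, Matrix.smul_mul, ← cM_mul, ← cM_mul, hb2.2]

end Fix

theorem tensor_matrix (F E A : Type*) [Field F] [Field E] [Algebra F E] [Ring A] [Algebra F A]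
    [Algebra.IsCentral F A] [IsSimpleRing A] [FiniteDimensional F A] (n : ℕ) (hn : 0 < n) :
    Nonempty ((E ⊗[F] Matrix (Fin n) (Fin n) A) ≃ₐ[E] Matrix (Fin n) (Fin n) (E ⊗[F] A)) := by
  have : Nonempty (Fin n) := ⟨⟨0, hn⟩⟩
  let g : Matrix (Fin n) (Fin n) A →ₐ[F] Matrix (Fin n) (Fin n) (E ⊗[F] A) :=
    (Algebra.TensorProduct.includeRight).mapMatrix
  let f : (E ⊗[F] Matrix (Fin n) (Fin n) A) →ₐ[E] Matrix (Fin n) (Fin n) (E ⊗[F] A) :=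
    Algebra.TensorProduct.lift (Algebra.ofId _ _) g (fun m a => Algebra.commutes m (g a))
  have : IsSimpleRing (Matrix (Fin n) (Fin n) A) := inferInstance
  have : Algebra.IsCentral F (Matrix (Fin n) (Fin n) A) := inferInstance
  have := isSimpleRing_baseChange F E (Matrix (Fin n) (Fin n) A)
  have hi : Function.Injective f := f.toRingHom.injective
  have hf : Module.finrank E (E ⊗[F] Matrix (Fin n) (Fin n) A) =
      Module.finrank E (Matrix (Fin n) (Fin n) (E ⊗[F] A)) := by
    rw [Module.finrank_baseChange, Module.finrank_matrix, Module.finrank_matrix,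
      Module.finrank_baseChange]
  have hs : Function.Surjective f :=
    (LinearMap.injective_iff_surjective_of_finrank_eq_finrank (f := f.toLinearMap) hf).1 hi
  exact ⟨AlgEquiv.ofBijective f ⟨hi, hs⟩⟩

section Fix2
variable {F K ι A : Type u} [Field F] [Field K] [Algebra F K] [Fintype ι] [DecidableEq ι]
  [MulAction (K ≃ₐ[F] K) ι] [Ring A] [Algebra F A]

theorem step6 [IsGalois F K] [IsSepClosed K] [Nonempty ι]
    (φ : A →ₐ[F] Matrix ι ι K)
    (hd : Module.finrank F A = Fintype.card ι ^ 2) [Algebra.IsCentral F A] [IsSimpleRing A]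
    [FiniteDimensional F A] [MulAction.IsPretransitive (K ≃ₐ[F] K) ι]
    (hsι : ∃ S : Finset K, ∀ σ : K ≃ₐ[F] K, (∀ x ∈ S, σ x = x) → ∀ i : ι, σ • i = i)
    (B C : Type u) [Ring B] [Algebra F B] [Ring C] [Algebra F C] (hB : IsCSA F B) (hC : IsCSA F C)
    (h : BrauerEquiv (EF φ) (EF φ ⊗[F] B) (EF φ ⊗[F] C)) : BrauerEquiv F B C := by
  obtain ⟨n, m, hn, hm, ⟨e⟩⟩ := h
  obtain ⟨_, _, _⟩ := hB
  obtain ⟨_, _, _⟩ := hC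
  have : Nonempty (Fin n) := ⟨⟨0, hn⟩⟩
  have : Nonempty (Fin m) := ⟨⟨0, hm⟩⟩
  obtain ⟨e1⟩ := tensor_matrix F (EF φ) B n hn
  obtain ⟨e2⟩ := tensor_matrix F (EF φ) C m hm
  have ψ := (e1.trans e).trans e2.symm
  refine ⟨n, m, hn, hm, ?_⟩
  rcases finite_or_infinite F with hF | hF
  · have hdim := ψ.toLinearEquiv.finrank_eq
    rw [Module.finrank_baseChange, Module.finrank_baseChange] at hdim
    exact iso_of_finite F _ _ hdim
  · exact step5 φ hd hsι ψ

theorem resInjP_of (p : ℕ) (E : Type u) [Field E] [inst : Algebra F E]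
    (h : ∀ (B C : Type u) [Ring B] [Algebra F B] [Ring C] [Algebra F C], IsCSA F B → IsCSA F C →
      BrauerEquiv E (E ⊗[F] B) (E ⊗[F] C) → BrauerEquiv F B C) :
    ResInjP p F E (algebraMap F E) := by
  have key : ∀ (i : Algebra F E), i = inst → (letI : Algebra F E := i
      ∀ (A B : Type u) [Ring A] [Algebra F A] [Ring B] [Algebra F B],
      IsCSA F A → IsCSA F B → IsPTorsion F A p → IsPTorsion F B p →
      BrauerEquiv E (E ⊗[F] A) (E ⊗[F] B) → BrauerEquiv F A B) := by
    rintro _ rfl B C _ _ _ _ hB hC _ _ hBC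
    exact h B C hB hC hBC
  exact key _ toAlgebra_algebraMap

end Fix2
end SplitExt

namespace SplitExt
open MvPolynomial

theorem conj_diag {M ι : Type*} [Field M] [Fintype ι] [DecidableEq ι] (s : M →+* M)
    (X a P : Matrix ι ι M) (d d' : ι → M) (hX : X.det ≠ 0) (hs : X.map s = a * X * P)
    (hP : Matrix.diagonal d * P = P * Matrix.diagonal d') (hd : ∀ i, s (d i) = d' i) :
    a * (X * Matrix.diagonal d * X⁻¹) = (X * Matrix.diagonal d * X⁻¹).map s * a := by
  have hXu : IsUnit X.det := isUnit_iff_ne_zero.2 hX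
  have hZX : X * Matrix.diagonal d * X⁻¹ * X = X * Matrix.diagonal d := by
    rw [mul_assoc, Matrix.nonsing_inv_mul _ hXu, mul_one]
  generalize X * Matrix.diagonal d * X⁻¹ = Z at hZX ⊢
  have hD : (Matrix.diagonal d).map s = Matrix.diagonal d' := by
    rw [Matrix.diagonal_map (map_zero s)]
    congr 1
    funext i
    exact hd i
  have hZ : Z.map s * X.map s = X.map s * Matrix.diagonal d' := by
    rw [← hD, ← Matrix.map_mul, ← Matrix.map_mul, hZX]
  have hu : IsUnit (X.map s) := isUnit_map s ((Matrix.isUnit_iff_isUnit_det _).2 hXu)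
  rw [hs, mul_assoc a] at hu
  rw [Matrix.isUnit_iff_isUnit_det, Matrix.det_mul] at hu
  have hu2 : IsUnit (X * P) := (Matrix.isUnit_iff_isUnit_det _).2 (isUnit_of_mul_isUnit_right hu)
  apply hu2.mul_right_cancel
  have h1 : a * Z * (X * P) = a * X * P * Matrix.diagonal d' := by
    calc a * Z * (X * P) = a * (Z * X) * P := by simp only [mul_assoc]
    _ = a * X * (Matrix.diagonal d * P) := by rw [hZX]; simp only [mul_assoc]
    _ = _ := by rw [hP]; simp only [mul_assoc]
  rw [h1, ← hs, ← hZ, hs]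
  simp only [mul_assoc]

theorem inv_comm {R : Type*} [Monoid R] (u : Rˣ) (x y : R) (h : (u : R) * x = y * u) :
    (↑u⁻¹ : R) * y = x * (↑u⁻¹ : R) := by
  rw [Units.inv_mul_eq_iff_eq_mul, ← mul_assoc, h, mul_assoc, Units.mul_inv, mul_one]

section Z
variable {F K ι A : Type*} [Field F] [Field K] [Algebra F K] [Fintype ι] [DecidableEq ι]
  [MulAction (K ≃ₐ[F] K) ι] [Ring A] [Algebra F A]

/-- the generic element of the torus -/
noncomputable def ZM (c : ι → K) : Matrix ι ι (FM K ι) :=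
  XM K ι * Matrix.diagonal (fun i => algebraMap K (FM K ι) (c i)) * (XM K ι)⁻¹

theorem ZM_comm (c : ι → K) (hc : ∀ (σ : K ≃ₐ[F] K) i, c (σ • i) = σ (c i)) (T : Tr F K ι) :
    cM ι T.a * ZM c = (ZM c).map (PsiM T) * cM ι T.a := by
  refine conj_diag (PsiM T) (XM K ι) (cM ι T.a)
    (Matrix.of fun k i => if k = T.s • i then algebraMap K (FM K ι) (T.t i) else 0) _
    (fun i => algebraMap K (FM K ι) (c (T.s • i))) det_XM_ne_zero ?_ ?_ ?_
  · rw [PsiM_XM]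
    change _ = toM T.a * XM K ι * _
    generalize toM T.a * XM K ι = Q
    ext j i
    rw [Matrix.mul_apply]
    simp [mul_comm]
  · ext k i
    rw [Matrix.diagonal_mul, Matrix.mul_diagonal]
    simp only [Matrix.of_apply]
    split_ifs with h
    · rw [h, mul_comm]
    · simp
  · intro i
    rw [PsiM_algebraMapK, hc]

theorem ZM_coeff [Algebra.IsCentral F A] [IsSimpleRing A] [FiniteDimensional F A] [Nonempty ι]
    (φ : A →ₐ[F] Matrix ι ι K) (hd : Module.finrank F A = Fintype.card ι ^ 2)
    (c : ι → K) (hc : ∀ (σ : K ≃ₐ[F] K) i, c (σ • i) = σ (c i))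
    {κ : Type*} [Fintype κ] (b : Module.Basis κ F A) (m : κ → FM K ι)
    (hm : ZM c = ∑ k, m k • repM ι φ (b k)) (k : κ) : m k ∈ EF φ := by
  intro T hT
  obtain ⟨u, hu⟩ := cM_unit ι T.ha
  refine coeff_fixed hd (repM ι φ) b m (PsiM T) (↑u⁻¹) (Units.isUnit _) ?_ ?_ k
  · intro x
    refine inv_comm u _ _ ?_
    rw [hu, repM_apply, cM_Psi, ← cM_mul, ← cM_mul, hT]
  · rw [← hm]
    refine inv_comm u _ _ ?_
    rw [hu]
    exact ZM_comm c hc T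

theorem split_elt [Algebra.IsCentral F A] [IsSimpleRing A] [FiniteDimensional F A] [Nonempty ι]
    (φ : A →ₐ[F] Matrix ι ι K) (hd : Module.finrank F A = Fintype.card ι ^ 2)
    (c : ι → K) (hc : ∀ (σ : K ≃ₐ[F] K) i, c (σ • i) = σ (c i)) (i0 i1 : ι) (hi : c i1 ≠ c i0)
    (N : Type*) [Field N] [Algebra F N] [Algebra N (FM K ι)] [IsScalarTower F N (FM K ι)]
    (hN : ∀ f ∈ EF φ, f ∈ Set.range (algebraMap N (FM K ι)))
    (h0 : algebraMap K (FM K ι) (c i0) ∈ Set.range (algebraMap N (FM K ι))) :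
    ∃ z : N ⊗[F] A, z ≠ 0 ∧ ¬ IsUnit z := by
  obtain ⟨Λ, hΛ⟩ := exists_lift (E := N) (repM ι φ)
  let b := Module.finBasis F A
  obtain ⟨m, hm⟩ := exists_coeff hd (repM ι φ) b (ZM c)
  have hmem := ZM_coeff φ hd c hc b m hm
  choose n hn using fun k => hN _ (hmem k)
  obtain ⟨n0, hn0⟩ := h0
  let z : N ⊗[F] A := ∑ k, n k ⊗ₜ b k - algebraMap N _ n0
  have hz : Λ z = XM K ι * Matrix.diagonal (fun i => algebraMap K (FM K ι) (c i) - algebraMap K (FM K ι) (c i0)) * (XM K ι)⁻¹ := by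
    have h1 : Λ z = ZM c - algebraMap K (FM K ι) (c i0) • (1 : Matrix ι ι (FM K ι)) := by
      rw [map_sub, map_sum, AlgHom.commutes, hm]
      congr 1
      · refine Finset.sum_congr rfl fun k _ => ?_
        rw [hΛ, hn]
      · rw [IsScalarTower.algebraMap_apply N (FM K ι) (Matrix ι ι (FM K ι)), hn0, Algebra.algebraMap_eq_smul_one]
    have h2 : Matrix.diagonal (fun i => algebraMap K (FM K ι) (c i) - algebraMap K (FM K ι) (c i0)) =
      Matrix.diagonal (fun i => algebraMap K (FM K ι) (c i)) - algebraMap K (FM K ι) (c i0) • (1 : Matrix ι ι (FM K ι)) := by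
      rw [Matrix.smul_one_eq_diagonal, Matrix.diagonal_sub]
    rw [h1, h2, mul_sub, sub_mul, Matrix.mul_smul, Matrix.smul_mul, mul_one,
      Matrix.mul_nonsing_inv _ (isUnit_iff_ne_zero.2 det_XM_ne_zero), ZM]
  refine ⟨z, fun h => ?_, fun h => ?_⟩
  · rw [h, map_zero] at hz
    have h3 := congrArg (fun W => (XM K ι)⁻¹ * W * XM K ι) hz
    have hu : IsUnit (XM K ι).det := isUnit_iff_ne_zero.2 det_XM_ne_zero
    simp only [mul_zero, zero_mul] at h3
    rw [mul_assoc, mul_assoc, Matrix.nonsing_inv_mul _ hu, mul_one, ← mul_assoc,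
      Matrix.nonsing_inv_mul _ hu, one_mul] at h3
    have h4 := congrFun (congrFun h3 i1) i1
    rw [Matrix.diagonal_apply_eq, Matrix.zero_apply] at h4
    exact hi ((algebraMap K (FM K ι)).injective (sub_eq_zero.1 h4.symm))
  · have h5 := h.map Λ
    rw [hz, Matrix.isUnit_iff_isUnit_det, Matrix.det_mul, Matrix.det_mul, Matrix.det_diagonal,
      Finset.prod_eq_zero (Finset.mem_univ i0) (sub_self _)] at h5
    simp at h5

end Z

theorem split_of_nonunit (p : ℕ) (hp : p.Prime) (N B : Type u) [Field N] [Ring B] [Algebra N B]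
    [Algebra.IsCentral N B] [IsSimpleRing B] [FiniteDimensional N B]
    (hd : Module.finrank N B = p ^ 2) (z : B) (hz : z ≠ 0) (hz' : ¬ IsUnit z) : IsSplit N B := by
  obtain ⟨k, hk, D, _, _, _, _, ⟨e⟩⟩ := exists_matrix_division N B
  have h1 : k ^ 2 * Module.finrank N D = p ^ 2 := by
    rw [← hd, e.toLinearEquiv.finrank_eq, Module.finrank_matrix]
    simp [sq]
  have hkp : k ∣ p := (Nat.pow_dvd_pow_iff (n := 2) (by norm_num)).1 ⟨_, h1.symm⟩
  rcases (Nat.dvd_prime hp).1 hkp with rfl | rfl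
  · exfalso
    apply hz'
    have : IsUnit (e z) := by
      have h0 : e z ≠ 0 := by simpa using hz
      have h2 : e z = Matrix.scalar (Fin 1) (e z 0 0) := by
        ext i j
        rw [Subsingleton.elim i 0, Subsingleton.elim j 0]
        simp
      have h3 : e z 0 0 ≠ 0 := by
        intro h
        apply h0
        rw [h2, h, map_zero]
      rw [h2]
      exact (isUnit_iff_ne_zero.2 h3).map (Matrix.scalar (Fin 1))
    simpa using this
  · have h4 : Module.finrank N D = 1 := by
      have : 0 < k ^ 2 := by positivity
      exact Nat.eq_of_mul_eq_mul_left this (by rw [h1, mul_one])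
    have hb : Function.Bijective (Algebra.ofId N D) := by
      refine ⟨(algebraMap N D).injective, ?_⟩
      exact (LinearMap.injective_iff_surjective_of_finrank_eq_finrank
        (f := (Algebra.ofId N D).toLinearMap) (by rw [h4, Module.finrank_self])).1 (algebraMap N D).injective
    exact ⟨k, hk, ⟨e.trans (AlgEquiv.ofBijective _ hb).symm.mapMatrix⟩⟩
end SplitExt

namespace SplitExt

theorem compositum_aux {E M L : Type*} [Field E] [Field M] [Field L] [Algebra E M]
    (g : L → M) (hg : ∀ x, IsAlgebraic E (g x))
    (a : L → IntermediateField.adjoin E (Set.range g)) (ha : ∀ x, (a x : M) = g x) :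
    Algebra.adjoin E (Set.range a) = ⊤ := by
  have h := IntermediateField.adjoin_toSubalgebra_of_isAlgebraic (F := E) (S := Set.range g)
    (by rintro _ ⟨x, rfl⟩; exact hg x)
  have hinj : Function.Injective (IntermediateField.adjoin E (Set.range g)).val :=
    (IntermediateField.adjoin E (Set.range g)).val.injective
  apply Subalgebra.map_injective hinj
  rw [AlgHom.map_adjoin, ← Set.range_comp]
  have : (⇑(IntermediateField.adjoin E (Set.range g)).val ∘ a) = g := funext ha
  rw [this, ← h, Algebra.map_top, IntermediateField.range_val]

/-- Galois action on embeddings -/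
@[reducible] def embAction (F K L : Type*) [Field F] [Field K] [Field L] [Algebra F K] [Algebra F L] :
    MulAction (K ≃ₐ[F] K) (L →ₐ[F] K) where
  smul σ i := (σ : K →ₐ[F] K).comp i
  one_smul i := by ext x; rfl
  mul_smul σ τ i := by ext x; rfl

theorem reindex_rep {F A K ι : Type*} [Field F] [Ring A] [Algebra F A] [Field K] [Algebra F K]
    [Fintype ι] [DecidableEq ι] (p : ℕ) (hc : Fintype.card ι = p)
    (φ : A →ₐ[F] Matrix (Fin p) (Fin p) K) : Nonempty (A →ₐ[F] Matrix ι ι K) :=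
  ⟨(Matrix.reindexAlgEquiv F K (Fintype.equivFinOfCardEq hc).symm).toAlgHom.comp φ⟩

theorem sep_of_deg (p : ℕ) (hp : p.Prime) (F : Type*) [Field F] (hchar : ringChar F ≠ p)
    (L : Type*) [Field L] [Algebra F L] (hL : Module.finrank F L = p) : Algebra.IsSeparable F L := by
  have : FiniteDimensional F L := FiniteDimensional.of_finrank_pos (hL ▸ hp.pos)
  have hpF : (p : F) ≠ 0 := by
    intro h
    have h1 : ringChar F ∣ p := ringChar.dvd h
    rcases (Nat.dvd_prime hp).1 h1 with h2 | h2
    · exact CharP.ringChar_ne_one h2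
    · exact hchar h2
  refine ⟨fun x => ?_⟩
  have hx : IsIntegral F x := Algebra.IsIntegral.isIntegral x
  have hdvd : (minpoly F x).natDegree ∣ p := hL ▸ minpoly.degree_dvd hx
  have hd0 : ((minpoly F x).natDegree : F) ≠ 0 := by
    rcases (Nat.dvd_prime hp).1 hdvd with h | h <;> rw [h]
    · simp
    · exact hpF
  have hpos := minpoly.natDegree_pos hx
  refine (Polynomial.separable_iff_derivative_ne_zero (minpoly.irreducible hx)).2 fun h => ?_
  have hc := Polynomial.coeff_derivative (minpoly F x) ((minpoly F x).natDegree - 1)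
  rw [h, Nat.sub_add_cancel hpos, Polynomial.coeff_natDegree, (minpoly.monic hx).leadingCoeff,
    Polynomial.coeff_zero, one_mul, ← Nat.cast_succ, Nat.succ_eq_add_one, Nat.sub_add_cancel hpos] at hc
  exact hd0 hc.symm

theorem emb_trans (F K L : Type*) [Field F] [Field K] [Field L] [Algebra F K] [Algebra F L]
    [IsGalois F K] (i j : L →ₐ[F] K) : ∃ τ : K ≃ₐ[F] K, ∀ y, τ (i y) = j y := by
  let e : i.fieldRange →ₐ[F] K := j.comp (AlgEquiv.ofInjectiveField i).symm.toAlgHom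
  obtain ⟨τ, hτ⟩ : ∃ τ : K →ₐ[F] K, ∀ y : i.fieldRange, τ y = e y :=
    ⟨e.liftNormal K, fun y => e.liftNormal_commutes K y⟩
  refine ⟨AlgEquiv.ofBijective τ (Algebra.IsAlgebraic.algHom_bijective τ), fun y => ?_⟩
  have h1 := hτ (AlgEquiv.ofInjectiveField i y)
  have h2 : e (AlgEquiv.ofInjectiveField i y) = j y :=
    congrArg j ((AlgEquiv.ofInjectiveField i).symm_apply_apply y)
  exact h1.trans h2

theorem split_main {F K ι A : Type u} [Field F] [Field K] [Algebra F K] [Fintype ι] [DecidableEq ι]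
    [MulAction (K ≃ₐ[F] K) ι] [Ring A] [Algebra F A]
    [Algebra.IsCentral F A] [IsSimpleRing A] [FiniteDimensional F A] [Nonempty ι]
    (p : ℕ) (hp : p.Prime) (hdegA : Module.finrank F A = p ^ 2)
    (φ : A →ₐ[F] Matrix ι ι K) (hd : Module.finrank F A = Fintype.card ι ^ 2)
    (c : ι → K) (hc : ∀ (σ : K ≃ₐ[F] K) i, c (σ • i) = σ (c i)) (i0 i1 : ι) (hi : c i1 ≠ c i0)
    (N : Type u) [Field N] [Algebra F N] [Algebra N (FM K ι)] [IsScalarTower F N (FM K ι)]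
    (hN : ∀ f ∈ EF φ, f ∈ Set.range (algebraMap N (FM K ι)))
    (h0 : algebraMap K (FM K ι) (c i0) ∈ Set.range (algebraMap N (FM K ι))) :
    IsSplit N (N ⊗[F] A) := by
  obtain ⟨z, hz, hz'⟩ := split_elt φ hd c hc i0 i1 hi N hN h0
  have := isSimpleRing_baseChange F N A
  have := isCentral_baseChange F N A
  exact split_of_nonunit p hp N _ (by rw [Module.finrank_baseChange, hdegA]) z hz hz'

theorem assemble (p : ℕ) (F A L E M : Type u) [Field F] [Ring A] [Algebra F A] [Field L]
    [Algebra F L] [FiniteDimensional F L] [Field E] [Algebra F E] [Field M] [Algebra F M] [Algebra E M]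
    [IsScalarTower F E M] (hres : ResInjP p F E (algebraMap F E)) (g : L →ₐ[F] M)
    (hs : ∀ (N : Type u) [Field N] [Algebra F N] [Algebra N M] [IsScalarTower F N M],
      (∀ e : E, algebraMap E M e ∈ Set.range (algebraMap N M)) →
      (∀ y, g y ∈ Set.range (algebraMap N M)) → IsSplit N (N ⊗[F] A)) :
    Nonempty (SplittingExtension p F A L) := by
  let N := IntermediateField.adjoin E (Set.range g)
  have hgN : ∀ y, g y ∈ N := fun y => IntermediateField.subset_adjoin _ _ ⟨y, rfl⟩
  let _ : Algebra L N := (g.toRingHom.codRestrict N.toSubring hgN).toAlgebra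
  have hLN : ∀ y, ((algebraMap L N y : N) : M) = g y := fun _ => rfl
  have tN : IsScalarTower F N M :=
    IsScalarTower.of_algebraMap_eq fun y => by
      rw [IsScalarTower.algebraMap_apply F E M, IsScalarTower.algebraMap_apply F E N]
      rfl
  have tL : IsScalarTower F L N := IsScalarTower.of_algebraMap_eq fun y => Subtype.ext (by
    rw [hLN, g.commutes]
    exact (IsScalarTower.algebraMap_apply F N M y).symm)
  have hcomp : Algebra.adjoin E (Set.range (algebraMap L N)) = ⊤ :=
    compositum_aux g (fun y => ((Algebra.IsIntegral.isIntegral (R := F) y).map g).isAlgebraic.tower_top _) _ hLN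
  exact ⟨{ E := E
           resInj := hres
           N := N
           compositum := hcomp
           splits := hs N (fun e => ⟨algebraMap E N e, rfl⟩) (fun y => ⟨⟨g y, hgN y⟩, rfl⟩) }⟩

end SplitExt

open SplitExt in
/-- for `F` of characteristic not `p`, a central simple `F`-algebra `A` of
degree `p` and a degree-`p` extension `L/F`, there is a field extension `E/F` with
`Br(F)[p] → Br(E)[p]` injective such that `EL` splits `A ⊗_F E`. -/
theorem exists_splitting_extension (p : ℕ) (hp : p.Prime)
    (F : Type u) [Field F] (hchar : ringChar F ≠ p)
    (A : Type u) [Ring A] [Algebra F A] (hA : IsCSA F A)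
    (hdegA : Module.finrank F A = p ^ 2)
    (L : Type u) [Field L] [Algebra F L] (hL : Module.finrank F L = p) :
    Nonempty (SplittingExtension p F A L) := by
  classical
  obtain ⟨_, _, _⟩ := hA
  have : FiniteDimensional F L := FiniteDimensional.of_finrank_pos (hL ▸ hp.pos)
  have := sep_of_deg p hp F hchar L hL
  let K := SeparableClosure F
  let ι := L →ₐ[F] K
  have hcard : Fintype.card ι = p := by
    rw [← hL]
    exact AlgHom.card_of_splits F L K fun x => IsSepClosed.splits_codomain _ ((Algebra.IsSeparable.isSeparable F x))
  let _ : MulAction (K ≃ₐ[F] K) ι := embAction F K L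
  have hsm : ∀ (σ : K ≃ₐ[F] K) (i : ι) (x : L), (σ • i) x = σ (i x) := fun _ _ _ => rfl
  have hpt : MulAction.IsPretransitive (K ≃ₐ[F] K) ι := by
    refine ⟨fun i j => ?_⟩
    obtain ⟨τ, hτ⟩ := emb_trans F K L i j
    exact ⟨τ, AlgHom.ext hτ⟩
  have hsι : ∃ S : Finset K, ∀ σ : K ≃ₐ[F] K, (∀ x ∈ S, σ x = x) → ∀ i : ι, σ • i = i := by
    let b := Module.finBasis F L
    refine ⟨Finset.univ.image fun x : ι × Fin (Module.finrank F L) => x.1 (b x.2), fun σ hσ i => ?_⟩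
    have : (σ • i).toLinearMap = i.toLinearMap := by
      apply b.ext
      intro k
      exact hσ _ (Finset.mem_image_of_mem _ (Finset.mem_univ (i, k)))
    exact AlgHom.toLinearMap_injective this
  have : Nontrivial ι := Fintype.one_lt_card_iff_nontrivial.1 (hcard ▸ hp.one_lt)
  obtain ⟨i0, i1, hi⟩ := exists_pair_ne ι
  have : ∃ x, i1 x ≠ i0 x := by
    by_contra! h
    exact hi (AlgHom.ext h).symm
  obtain ⟨x, hx⟩ := this
  obtain ⟨n, hn, hn2, ⟨φ0⟩⟩ := exists_splitting F K A
  have hnp : n = p := Nat.pow_left_injective (n := 2) (by norm_num) (hn2.symm.trans hdegA)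
  subst hnp
  obtain ⟨φ⟩ := reindex_rep (ι := ι) n hcard φ0
  have hd : Module.finrank F A = Fintype.card ι ^ 2 := by rw [hcard, hdegA]
  let g : L →ₐ[F] FM K ι := (IsScalarTower.toAlgHom F K (FM K ι)).comp i0
  exact assemble n F A L (EF φ) (FM K ι)
    (resInjP_of n _ (fun B C _ _ _ _ hB hC h => step6 φ hd hsι B C hB hC h)) g
    (fun N _ _ _ _ h1 h2 => split_main n hp hdegA φ hd (fun i : ι => i x) (fun σ i => hsm σ i x)
      i0 i1 hx N (fun f hf => h1 ⟨f, hf⟩) (h2 x))
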